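/- arXiv:math/0508326 — 2 statements merged into one kernel-verified Lean document; each statement's English description precedes it below -/
import Mathlib

section
/- Let k be an algebraically closed field of characteristic 0, let r ≥ 3, and let G ∈ k[x_0,…,x_r] be a nonzero homogeneous polynomial of positive degree defining the (possibly non-reduced or reducible) hypersurface Z = {G = 0} ⊂ P^r. Let P ∈ k^{r+1} be nonzero with G(P) = 0, and suppose that for every nonzero linear form ℓ on k^{r+1} with ℓ(P) = 0 there exists an (r−1)-dimensional k-linear subspace W of k^{r+1} with P ∈ W on which both ℓ and G vanish identically. If r = 3, suppose additionally that there exists a nonzero linear form ℓ_0 with ℓ_0(P) = 0 such that, fixing a k-linear isomorphism φ : k^3 → ker ℓ_0 and writing g = G∘φ ∈ k[u_0,u_1,u_2], there is, up to scalar multiples, exactly one nonzero linear form λ ∈ k[u_0,u_1,u_2] with λ dividing g and λ(φ^{-1}(P)) = 0, and moreover λ^2 does not divide g. Then there exists an r-dimensional k-linear subspace W of k^{r+1} with P ∈ W on which G vanishes identically. -/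
open MvPolynomial

/-- The composite `G ∘ ψ` of a polynomial `G` in `m` variables with a linear map
`ψ : k^n → k^m`, as a polynomial in `n` variables. -/
noncomputable def restrictPoly {k : Type*} [CommSemiring k] {m n : ℕ}
    (G : MvPolynomial (Fin m) k) (ψ : (Fin n → k) →ₗ[k] (Fin m → k)) :
    MvPolynomial (Fin n) k :=
  aeval (fun i => ∑ j, C (ψ (Pi.single j 1) i) * X j) G

/-!
Move `P` to the vertex `(1, 0, …, 0)` and let `ℓ_t : y = ∑ i, t i * x i` be the hyperplane through
`P` with generic coefficients `t`. It contains a codimension-two space on which `G` vanishes, cut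
out by a second form `L` over a finite extension of `k(t)`, to which the derivations `∂/∂tᵢ` extend.
As `G` itself does not depend on `t`, differentiating the relation `G ∈ (ℓ_t, L)` constrains the
derivatives of `L`: if `r ≥ 4`, a suitable member `B = c ℓ_t + L` of the pencil does not depend on
`t` up to scalars. If `B` did not divide `G`, the same differentiation would put `∂ℓ_t/∂tⱼ = -xⱼ` in
the ideal `(ℓ_t, L)`, which is false. So some linear form vanishing at `P` divides `G` over the
extension, and specialising its coefficients gives one over `k`.

If `r = 3`, the lines sweep out a component of `G = 0` which is a cone over a plane curve `f = 0`.
A plane through the vertex meets it in `deg f` lines, so a plane section with only one line through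
`P`, and this line simple, forces `deg f = 1`.
-/

section LinearForms

variable {ι A B : Type*} [Fintype ι] [CommRing A] [CommRing B]

/-- The linear form `∑ i, b i * X i` with coefficient vector `b`. -/
noncomputable def linForm : (ι → A) →ₗ[A] MvPolynomial ι A :=
  Fintype.linearCombination A X

lemma linForm_apply (b : ι → A) : linForm b = ∑ i, C (b i) * X i := by
  simp only [linForm, Fintype.linearCombination_apply, smul_eq_C_mul]

lemma linForm_single [DecidableEq ι] (i : ι) : linForm (Pi.single i (1 : A)) = X i := by
  rw [linForm, Fintype.linearCombination_apply_single, one_smul]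

lemma eval_linForm (x b : ι → A) : eval x (linForm b) = b ⬝ᵥ x := by
  simp [linForm_apply, dotProduct]

lemma map_linForm (f : A →+* B) (b : ι → A) : map f (linForm b) = linForm (f ∘ b) := by
  simp [linForm_apply]

lemma isHomogeneous_linForm (b : ι → A) : (linForm b).IsHomogeneous 1 := by
  rw [linForm_apply]
  exact IsHomogeneous.sum _ _ _ fun i _ => isHomogeneous_C_mul_X (b i) i

/-- The substitution `X i ↦ X i - u i * ∑ j, b j * X j`. When `b ⬝ᵥ u = 1`, it is the pullback of
polynomials along the projection onto the hyperplane `b = 0` with direction `u`. -/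
noncomputable def elimLinForm (b u : ι → A) : MvPolynomial ι A →ₐ[A] MvPolynomial ι A :=
  bind₁ fun i => X i - C (u i) * linForm b

lemma elimLinForm_X (b u : ι → A) (i : ι) : elimLinForm b u (X i) = X i - C (u i) * linForm b :=
  bind₁_X_right _ i

lemma elimLinForm_linForm (b u a : ι → A) :
    elimLinForm b u (linForm a) = linForm a - C (a ⬝ᵥ u) * linForm b := by
  simp only [linForm_apply a, map_sum, map_mul, algHom_C, algebraMap_eq, elimLinForm_X, mul_sub,
    Finset.sum_sub_distrib, dotProduct, Finset.sum_mul, mul_assoc]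

lemma linForm_dvd_sub_elimLinForm (b u : ι → A) (f : MvPolynomial ι A) :
    linForm b ∣ f - elimLinForm b u f := by
  rw [← Ideal.mem_span_singleton, ← Ideal.Quotient.eq]
  have : Ideal.Quotient.mkₐ A (Ideal.span {linForm b}) =
      (Ideal.Quotient.mkₐ A (Ideal.span {linForm b})).comp (elimLinForm b u) := by
    ext i
    simp only [AlgHom.comp_apply, Ideal.Quotient.mkₐ_eq_mk, elimLinForm_X, Ideal.Quotient.eq,
      Ideal.mem_span_singleton, sub_sub_cancel]
    exact dvd_mul_left _ _
  exact DFunLike.congr_fun this f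

lemma linForm_dvd_iff {b u : ι → A} (h : b ⬝ᵥ u = 1) {f : MvPolynomial ι A} :
    linForm b ∣ f ↔ elimLinForm b u f = 0 := by
  refine ⟨fun ⟨g, hg⟩ => ?_, fun hf => ?_⟩
  · rw [hg, map_mul, elimLinForm_linForm, h, C_1, one_mul, sub_self, zero_mul]
  · simpa only [hf, sub_zero] using linForm_dvd_sub_elimLinForm b u f

lemma mem_span_linForm_pair_iff {b v a u : ι → A} (hb : b ⬝ᵥ v = 1) (ha : a ⬝ᵥ u = 1)
    (hav : a ⬝ᵥ v = 0) {f : MvPolynomial ι A} :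
    f ∈ Ideal.span {linForm b, linForm a} ↔ elimLinForm a u (elimLinForm b v f) = 0 := by
  rw [Ideal.mem_span_pair]
  constructor
  · rintro ⟨p, q, rfl⟩
    simp [elimLinForm_linForm, hb, ha, hav]
  · intro hf
    obtain ⟨p, hp⟩ := linForm_dvd_sub_elimLinForm b v f
    obtain ⟨q, hq⟩ := (linForm_dvd_iff ha).2 hf
    exact ⟨p, q, by linear_combination -hp - hq⟩

lemma map_elimLinForm (f : A →+* B) (b u : ι → A) (p : MvPolynomial ι A) :
    map f (elimLinForm b u p) = elimLinForm (f ∘ b) (f ∘ u) (map f p) := by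
  induction p using MvPolynomial.induction_on with
  | C a => simp only [algHom_C, map_C, algebraMap_eq]
  | add p q hp hq => simp only [map_add, hp, hq]
  | mul_X p i hp =>
    simp only [map_mul, hp, elimLinForm_X, map_sub, map_X, map_C, map_linForm, Function.comp_apply]

lemma eval_elimLinForm (b u x : ι → A) (p : MvPolynomial ι A) :
    eval x (elimLinForm b u p) = eval (x - (b ⬝ᵥ x) • u) p := by
  induction p using MvPolynomial.induction_on with
  | C a => simp only [algHom_C, algebraMap_eq, eval_C]
  | add p q hp hq => simp only [map_add, hp, hq]
  | mul_X p i hp => simp [hp, elimLinForm_X, eval_linForm, mul_comm (u i)]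

lemma isPrime_span_linForm [IsDomain A] {b u : ι → A} (h : b ⬝ᵥ u = 1) :
    (Ideal.span {linForm b}).IsPrime := by
  have : Ideal.span {linForm b} = RingHom.ker (elimLinForm b u) := by
    ext f
    rw [Ideal.mem_span_singleton, linForm_dvd_iff h, RingHom.mem_ker]
  exact this ▸ RingHom.ker_isPrime _

lemma isPrime_span_linForm_pair [IsDomain A] {b v a u : ι → A} (hb : b ⬝ᵥ v = 1) (ha : a ⬝ᵥ u = 1)
    (hav : a ⬝ᵥ v = 0) : (Ideal.span {linForm b, linForm a}).IsPrime := by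
  have : Ideal.span {linForm b, linForm a} =
      RingHom.ker ((elimLinForm a u).comp (elimLinForm b v)) := by
    ext f
    rw [mem_span_linForm_pair_iff hb ha hav, RingHom.mem_ker, AlgHom.comp_apply]
  exact this ▸ RingHom.ker_isPrime _

lemma exists_dotProduct_eq_one {K : Type*} [Field K] {b : ι → K} (hb : b ≠ 0) :
    ∃ u, b ⬝ᵥ u = 1 := by
  classical
  obtain ⟨i, hi⟩ := Function.ne_iff.1 hb
  exact ⟨Pi.single i (b i)⁻¹, by rw [dotProduct_single, mul_inv_cancel₀ hi]⟩

end LinearForms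

section Derivations

lemma mk_dvd_mk_iff_mem_span_pair {R : Type*} [CommRing R] {B M f : R} :
    Ideal.Quotient.mk (Ideal.span {B}) M ∣ Ideal.Quotient.mk (Ideal.span {B}) f ↔
      f ∈ Ideal.span {B, M} := by
  rw [← Ideal.mem_span_singleton, ← Set.image_singleton, ← Ideal.map_span,
    Ideal.mem_map_iff_of_surjective _ Ideal.Quotient.mk_surjective, Ideal.mem_span_pair]
  constructor
  · rintro ⟨g, hg, hgf⟩
    obtain ⟨q, rfl⟩ := Ideal.mem_span_singleton'.1 hg
    obtain ⟨p, hp⟩ := Ideal.mem_span_singleton'.1 (Ideal.Quotient.eq.1 hgf.symm)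
    exact ⟨p, q, by rw [hp, sub_add_cancel]⟩
  · rintro ⟨p, q, rfl⟩
    refine ⟨q * M, Ideal.mem_span_singleton'.2 ⟨q, rfl⟩, Ideal.Quotient.eq.2 ?_⟩
    exact Ideal.mem_span_singleton'.2 ⟨-p, by ring⟩

lemma exists_eq_pow_mul_add_mul {R : Type*} [CommRing R] [IsNoetherianRing R] {G B M : R}
    (hB : (Ideal.span {B}).IsPrime) (hBM : Ideal.span {B, M} ≠ ⊤) (hBG : ¬ B ∣ G) :
    ∃ (n : ℕ) (g w : R), g ∉ Ideal.span {B, M} ∧ G = M ^ n * g + B * w := by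
  let π := Ideal.Quotient.mk (Ideal.span {B})
  have hM : ¬ IsUnit (π M) := fun h =>
    hBM <| (Ideal.eq_top_iff_one _).2 <| mk_dvd_mk_iff_mem_span_pair.1 h.dvd
  have hG : π G ≠ 0 := by rwa [Ne, Ideal.Quotient.eq_zero_iff_dvd]
  obtain ⟨n, g', hg, hGg⟩ := WfDvdMonoid.max_power_factor' hG hM
  obtain ⟨g, rfl⟩ := Ideal.Quotient.mk_surjective g'
  rw [← map_pow, ← map_mul, Ideal.Quotient.eq, Ideal.mem_span_singleton] at hGg
  obtain ⟨w, hw⟩ := hGg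
  exact ⟨n, g, w, fun h => hg (mk_dvd_mk_iff_mem_span_pair.2 h), by linear_combination hw⟩

/-- Write `G = M ^ n * g + B * w` with `n` maximal and differentiate modulo `B`. -/
lemma derivation_mem_span_pair {k R : Type*} [CommRing k] [CommRing R] [IsNoetherianRing R]
    [Algebra k R] [Algebra ℚ R] {D : Derivation k R R} {G B M : R}
    (hB : (Ideal.span {B}).IsPrime) (hBM : (Ideal.span {B, M}).IsPrime) (hDB : B ∣ D B)
    (hDG : D G = 0) (hG : G ∈ Ideal.span {B, M}) (hBG : ¬ B ∣ G) : D M ∈ Ideal.span {B, M} := by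
  obtain ⟨n, g, w, hg, rfl⟩ := exists_eq_pow_mul_add_mul hB hBM.ne_top hBG
  obtain ⟨c, hc⟩ := hDB
  have hBmem : B ∈ Ideal.span {B, M} := Ideal.subset_span (Set.mem_insert _ _)
  obtain _ | n := n
  · rw [pow_zero, one_mul, Ideal.add_mem_iff_left _ (Ideal.mul_mem_right w _ hBmem)] at hG
    exact (hg hG).elim
  have key : M ^ n * ((n + 1 : ℕ) * g * D M + M * D g) = B * -(c * w + D w) := by
    simp only [map_add, Derivation.leibniz, Derivation.leibniz_pow, smul_eq_mul, nsmul_eq_mul,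
      Nat.add_sub_cancel, hc] at hDG
    linear_combination hDG
  have hM : M ^ n ∉ Ideal.span {B} := fun h => hBG <| Ideal.mem_span_singleton.1 <|
    add_mem (Ideal.mul_mem_right _ _ <| pow_succ M n ▸ Ideal.mul_mem_right _ _ h)
      (Ideal.mul_mem_right _ _ (Ideal.mem_span_singleton_self B))
  have hmem : (n + 1 : ℕ) * g * D M + M * D g ∈ Ideal.span {B} :=
    (hB.mem_or_mem <| key ▸ Ideal.mul_mem_right _ _ (Ideal.mem_span_singleton_self B)).resolve_left
      hM
  have hunit : IsUnit ((n + 1 : ℕ) : R) := by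
    simpa using (isUnit_iff_ne_zero.2 (Nat.cast_add_one_ne_zero n)).map (algebraMap ℚ R)
  rw [← Ideal.unit_mul_mem_iff_mem _ hunit]
  refine (hBM.mem_or_mem (x := g) ?_).resolve_left hg
  rw [show g * ((n + 1 : ℕ) * D M) = ((n + 1 : ℕ) * g * D M + M * D g) - M * D g by ring]
  exact sub_mem (Ideal.span_mono (by simp) hmem) <|
    Ideal.mul_mem_right _ _ (Ideal.subset_span (Set.mem_insert_of_mem _ rfl))

variable {k E ι : Type*} [CommRing k] [CommRing E] [Algebra k E]

/-- The derivation of `MvPolynomial ι E` acting on the coefficients through `D`. -/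
noncomputable def coeffDerivation (D : Derivation k E E) :
    Derivation k (MvPolynomial ι E) (MvPolynomial ι E) :=
  Derivation.mk'
    { toFun := AddMonoidAlgebra.map D.toLinearMap.toAddMonoidHom
      map_add' := AddMonoidAlgebra.map_add _
      map_smul' c f := by ext m; simp } fun f g => by
    classical
    ext m
    simp only [LinearMap.coe_mk, AddHom.coe_mk, coeff_addMonoidAlgebraMap, coeff_add, coeff_mul,
      smul_eq_mul, mul_comm g, LinearMap.toAddMonoidHom_coe, map_sum, Derivation.coeFn_coe,
      Derivation.leibniz, ← Finset.sum_add_distrib]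
    exact Finset.sum_congr rfl fun _ _ => by ring

lemma coeff_coeffDerivation (D : Derivation k E E) (f : MvPolynomial ι E) (m : ι →₀ ℕ) :
    coeff m (coeffDerivation D f) = D (coeff m f) :=
  rfl

lemma coeffDerivation_map (D : Derivation k E E) (f : MvPolynomial ι k) :
    coeffDerivation D (map (algebraMap k E) f) = 0 := by
  ext m
  rw [coeff_coeffDerivation, coeff_map, Derivation.map_algebraMap, coeff_zero]

lemma coeffDerivation_linForm [Fintype ι] (D : Derivation k E E) (b : ι → E) :
    coeffDerivation D (linForm b) = linForm (D ∘ b) := by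
  classical
  ext m
  simp only [coeff_coeffDerivation, linForm_apply, coeff_sum, coeff_C_mul, coeff_X, map_sum,
    mul_ite, mul_one, mul_zero, apply_ite D, map_zero, Function.comp_apply]

end Derivations

section Pencil

variable {A B : Type*} [CommRing A] [CommRing B] {n : ℕ}

/-- The vector `(0, y, x₁, …, xₙ)`. As a coefficient vector it is a linear form vanishing at the
vertex `(1, 0, …, 0)` through which all our hyperplanes pass. -/
def coneVec (y : A) (x : Fin n → A) : Fin (n + 2) → A :=
  Matrix.vecCons 0 (Matrix.vecCons y x)

lemma coneVec_dotProduct (y y' : A) (x x' : Fin n → A) :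
    coneVec y x ⬝ᵥ coneVec y' x' = y * y' + x ⬝ᵥ x' := by
  simp [coneVec]

lemma comp_coneVec {F : Type*} [FunLike F A B] [ZeroHomClass F A B] (f : F) (y : A)
    (x : Fin n → A) : f ∘ coneVec y x = coneVec (f y) (f ∘ x) := by
  ext i
  refine Fin.cases (map_zero f) (Fin.cases rfl fun _ => rfl) i

lemma coneVec_add (y y' : A) (x x' : Fin n → A) :
    coneVec y x + coneVec y' x' = coneVec (y + y') (x + x') := by
  simp [coneVec]

lemma smul_coneVec (c y : A) (x : Fin n → A) : c • coneVec y x = coneVec (c * y) (c • x) := by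
  simp [coneVec]

/-- The coefficient vector of the hyperplane `ℓ_t : y = ∑ i, t i * x i` through the vertex. -/
def pencilVec (t : Fin n → A) : Fin (n + 2) → A :=
  coneVec 1 (-t)

/-- The ideal of the codimension-two linear space cut out on the hyperplane `y = ∑ i, t i * x i`
by `∑ i, a i * x i = 0`. -/
noncomputable def pencilIdeal (t a : Fin n → A) : Ideal (MvPolynomial (Fin (n + 2)) A) :=
  Ideal.span {linForm (pencilVec t), linForm (coneVec 0 a)}

lemma mem_pencilIdeal_iff {t a u : Fin n → A} (ha : a ⬝ᵥ u = 1)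
    {f : MvPolynomial (Fin (n + 2)) A} :
    f ∈ pencilIdeal t a ↔
      elimLinForm (coneVec 0 a) (coneVec 0 u) (elimLinForm (pencilVec t) (coneVec 1 0) f) = 0 :=
  mem_span_linForm_pair_iff (by simp [pencilVec, coneVec_dotProduct])
    (by simp [coneVec_dotProduct, ha]) (by simp [coneVec_dotProduct])

lemma isPrime_pencilIdeal [IsDomain A] {t a u : Fin n → A} (ha : a ⬝ᵥ u = 1) :
    (pencilIdeal t a).IsPrime :=
  isPrime_span_linForm_pair (v := coneVec 1 0) (by simp [pencilVec, coneVec_dotProduct])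
    (u := coneVec 0 u) (by simp [coneVec_dotProduct, ha]) (by simp [coneVec_dotProduct])

lemma eval_eq_zero_of_mem_pencilIdeal {t a ω : Fin n → A} (hω : a ⬝ᵥ ω = 0)
    {f : MvPolynomial (Fin (n + 2)) A} (hf : f ∈ pencilIdeal t a) :
    eval (coneVec (t ⬝ᵥ ω) ω) f = 0 := by
  obtain ⟨p, q, rfl⟩ := Ideal.mem_span_pair.1 hf
  simp [eval_linForm, pencilVec, coneVec_dotProduct, hω]

lemma pencilIdeal_smul {t a : Fin n → A} {c : A} (hc : IsUnit c) :
    pencilIdeal t (c • a) = pencilIdeal t a := by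
  have : linForm (coneVec 0 (c • a)) = C c * linForm (coneVec 0 a) := by
    rw [← smul_eq_C_mul, ← map_smul, smul_coneVec, mul_zero]
  rw [pencilIdeal, pencilIdeal, Ideal.span_insert, Ideal.span_insert, this,
    Ideal.span_singleton_mul_left_unit (hc.map C)]

end Pencil

section DualFrame

/-- Test the hypothesis on the vectors `eₗ - aₗ eₛ` and their sums. -/
lemma exists_eq_mul_single_sub {ι A : Type*} [Fintype ι] [DecidableEq ι] [Nontrivial ι]
    [CommRing A] {a : ι → A} {s : ι} (has : a s = 1) {d : ι → ι → A}
    (hds : ∀ j, d j s = 0)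
    (hd : ∀ ω, a ⬝ᵥ ω = 0 → ∀ i j, ω i * (d j ⬝ᵥ ω) = ω j * (d i ⬝ᵥ ω)) :
    ∃ c : A, ∀ j, d j = c • (Pi.single j 1 - (Pi.single j 1 : ι → A) s • a) := by
  let v (l : ι) : ι → A := Pi.single l 1 - a l • Pi.single s 1
  have hav (l) : a ⬝ᵥ v l = 0 := by simp [v, has]
  have hdv (j l) : d j ⬝ᵥ v l = d j l := by simp [v, hds]
  have hvs {l} (hl : l ≠ s) : v l s = - a l := by simp [v, hl.symm]
  have hv {l m} (hm : m ≠ s) : v l m = (Pi.single l 1 : ι → A) m := by simp [v, hm]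
  have offdiag {j l} (hl : l ≠ s) (hj : j ≠ s) (hjl : j ≠ l) : d j l = 0 := by
    simpa [hdv, hv hl, hv hj, hjl] using hd (v l) (hav l) l j
  have row {l} (hl : l ≠ s) : d s l = - a l * d l l := by
    simpa [hdv, hv hl, hvs hl] using hd (v l) (hav l) l s
  have diag {l m} (hl : l ≠ s) (hm : m ≠ s) : d l l = d m m := by
    obtain rfl | hlm := eq_or_ne l m
    · rfl
    have := hd (v l + v m) (by rw [dotProduct_add, hav, hav, add_zero]) l m
    simpa [dotProduct_add, hdv, hv hl, hv hm, hlm, hlm.symm, offdiag hl hm hlm.symm,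
      offdiag hm hl hlm] using this.symm
  obtain ⟨l₀, hl₀⟩ := exists_ne s
  refine ⟨d l₀ l₀, fun j => funext fun l => ?_⟩
  obtain rfl | hl := eq_or_ne l s
  · simp [hds, has]
  obtain rfl | hj := eq_or_ne j s
  · simp [row hl, hl, diag hl hl₀, mul_comm]
  obtain rfl | hjl := eq_or_ne j l
  · simp [diag hj hl₀, hj.symm]
  · simp [offdiag hl hj hjl, hjl.symm, hj.symm]

/-- Commuting derivations `∂/∂t₁, …, ∂/∂tₙ` of `E` over `k`. -/
structure IsDualFrame {k E κ : Type*} [CommRing k] [CommRing E] [Algebra k E] [DecidableEq κ]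
    (D : κ → Derivation k E E) (t : κ → E) : Prop where
  comm : ∀ i j x, D i (D j x) = D j (D i x)
  comp_eq_single : ∀ i, D i ∘ t = Pi.single i 1

variable {k E : Type*} [CommRing k] [CommRing E] [Algebra k E] {n : ℕ}
  {D : Fin n → Derivation k E E} {t a : Fin n → E}

lemma IsDualFrame.coeffDerivation_pencilVec (h : IsDualFrame D t) (j : Fin n) :
    coeffDerivation (D j) (linForm (pencilVec t)) = -X j.succ.succ := by
  have hsingle : coneVec 0 (Pi.single j 1) = Pi.single j.succ.succ (1 : E) := by
    ext i
    refine Fin.cases ?_ (Fin.cases ?_ fun i => ?_) i <;>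
      simp [coneVec, Pi.single_apply, (Fin.succ_succ_ne_one _).symm]
  have hneg : D j ∘ (-t) = -Pi.single j 1 := by
    rw [← h.comp_eq_single j]
    ext i
    simp
  rw [coeffDerivation_linForm, pencilVec, comp_coneVec, Derivation.map_one_eq_zero, hneg,
    ← linForm_single, ← hsingle, ← map_neg]
  simp [coneVec]

/-- Compare `Dᵢ Dⱼ aⱼ` with `Dⱼ Dᵢ aⱼ` for an index `j` distinct from `i` and `s`. -/
lemma IsDualFrame.apply_eq_neg_single_mul_sq (h : IsDualFrame D t) (hn : 3 ≤ n) {s : Fin n} {c : E}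
    (hDa : ∀ j, D j ∘ a = c • (Pi.single j 1 - (Pi.single j 1 : Fin n → E) s • a)) (i : Fin n) :
    D i c = -(Pi.single i 1 : Fin n → E) s * c ^ 2 := by
  have hDa' (j l) : D j (a l) =
      c * ((Pi.single j 1 : Fin n → E) l - (Pi.single j 1 : Fin n → E) s * a l) :=
    congrFun (hDa j) l
  have off {i} (hi : i ≠ s) : D i c = 0 := by
    obtain ⟨j, hji, hjs⟩ := Fin.exists_ne_and_ne_of_two_lt i s hn
    simpa [hDa', hi.symm, hjs.symm, hji] using h.comm i j (a j)
  obtain rfl | hi := eq_or_ne i s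
  · have : Nontrivial (Fin n) := Fin.nontrivial_iff_two_le.2 (by lia)
    obtain ⟨j, hj⟩ := exists_ne i
    simpa [hDa', hj, hj.symm, off hj, sq] using h.comm i j (a j)
  · simp [off hi, hi.symm]

lemma IsDualFrame.comp_coneVec_eq_smul (h : IsDualFrame D t) (hn : 3 ≤ n) {s : Fin n} {c : E}
    (hDa : ∀ j, D j ∘ a = c • (Pi.single j 1 - (Pi.single j 1 : Fin n → E) s • a)) (j : Fin n) :
    D j ∘ coneVec c (a - c • t) =
      -((Pi.single j 1 : Fin n → E) s * c) • coneVec c (a - c • t) := by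
  have hDc := h.apply_eq_neg_single_mul_sq hn hDa j
  rw [comp_coneVec, smul_coneVec, hDc]
  congr 1
  · ring
  · ext l
    have hDal := congrFun (hDa j) l
    have hDtl := congrFun (h.comp_eq_single j) l
    simp only [Function.comp_apply, Pi.smul_apply, Pi.sub_apply, smul_eq_mul] at hDal hDtl
    simp only [Function.comp_apply, Pi.smul_apply, Pi.sub_apply, smul_eq_mul, map_sub,
      Derivation.leibniz, hDal, hDtl, hDc]
    ring

end DualFrame

section InvariantMember

variable {k E : Type*} [CommRing k] [Field E] [CharZero E] [Algebra k E] {n : ℕ}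
  {D : Fin n → Derivation k E E} {t a : Fin n → E}

/-- The derivations `xᵢ Dⱼ - xⱼ Dᵢ` kill `ℓ_t`, so `derivation_mem_span_pair` applies to them. -/
lemma IsDualFrame.mul_dotProduct_eq (h : IsDualFrame D t) {u : Fin n → E}
    (ha : a ⬝ᵥ u = 1) {G : MvPolynomial (Fin (n + 2)) k}
    (hG : map (algebraMap k E) G ∈ pencilIdeal t a)
    (hdvd : ¬ linForm (pencilVec t) ∣ map (algebraMap k E) G) {ω : Fin n → E} (hω : a ⬝ᵥ ω = 0)
    (i j : Fin n) : ω i * (D j ∘ a ⬝ᵥ ω) = ω j * (D i ∘ a ⬝ᵥ ω) := by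
  let Δ : Derivation k (MvPolynomial (Fin (n + 2)) E) (MvPolynomial (Fin (n + 2)) E) :=
    (X i.succ.succ : MvPolynomial _ E) • coeffDerivation (D j) -
      (X j.succ.succ : MvPolynomial _ E) • coeffDerivation (D i)
  have hΔt : Δ (linForm (pencilVec t)) = 0 := by
    simp [Δ, h.coeffDerivation_pencilVec, mul_comm]
  have hΔG : Δ (map (algebraMap k E) G) = 0 := by
    simp [Δ, coeffDerivation_map]
  have hb : pencilVec t ⬝ᵥ coneVec 1 0 = 1 := by simp [pencilVec, coneVec_dotProduct]
  have hΔa := eval_eq_zero_of_mem_pencilIdeal hω <|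
    derivation_mem_span_pair (isPrime_span_linForm hb) (isPrime_pencilIdeal ha) (hΔt ▸ dvd_zero _)
      hΔG hG hdvd
  rw [← sub_eq_zero]
  simp only [Δ, Derivation.sub_apply, Derivation.smul_apply, smul_eq_mul, coeffDerivation_linForm,
    comp_coneVec, map_zero, map_sub, map_mul, eval_X, eval_linForm, coneVec_dotProduct, zero_mul,
    zero_add] at hΔa
  exact hΔa

/-- The member `c • ℓ_t + ∑ i, a i * x i` of the pencil is constant up to a scalar. Were it not a
factor, `Dⱼ` would preserve the pencil, whereas `Dⱼ ℓ_t = -xⱼ`. -/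
lemma IsDualFrame.exists_linForm_dvd_of_apply_eq_one (h : IsDualFrame D t)
    (hn : 3 ≤ n) {s : Fin n} (has : a s = 1) {G : MvPolynomial (Fin (n + 2)) k}
    (hG : map (algebraMap k E) G ∈ pencilIdeal t a) :
    ∃ b : Fin (n + 2) → E, b ≠ 0 ∧ b 0 = 0 ∧ linForm b ∣ map (algebraMap k E) G := by
  by_cases ht : linForm (pencilVec t) ∣ map (algebraMap k E) G
  · exact ⟨pencilVec t, fun h0 => one_ne_zero (congrFun h0 1), rfl, ht⟩
  have : Nontrivial (Fin n) := Fin.nontrivial_iff_two_le.2 (by lia)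
  have ha : a ⬝ᵥ Pi.single s 1 = 1 := by simp [has]
  obtain ⟨c, hDa⟩ := exists_eq_mul_single_sub has (d := fun j => D j ∘ a) (by simp [has])
    fun ω hω => h.mul_dotProduct_eq ha hG ht hω
  let B : Fin (n + 2) → E := coneVec c (a - c • t)
  have hB0 : B ≠ 0 := by
    intro hB
    have hc : c = 0 := congrFun hB 1
    have := congrFun hB s.succ.succ
    simp [B, coneVec, has, hc] at this
  refine ⟨B, hB0, rfl, ?_⟩
  by_contra hBG
  obtain ⟨j, hj⟩ := exists_ne s
  have hspan : Ideal.span {linForm B, linForm (pencilVec t)} = pencilIdeal t a := by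
    have : linForm B = linForm (coneVec 0 a) + C c * linForm (pencilVec t) := by
      rw [← smul_eq_C_mul, ← map_smul, ← map_add, pencilVec, smul_coneVec, coneVec_add]
      simp [B, sub_eq_add_neg]
    rw [this, Ideal.span_pair_add_mul_right, Ideal.span_pair_comm, pencilIdeal]
  have hDB : coeffDerivation (D j) (linForm B) = 0 := by
    rw [coeffDerivation_linForm, h.comp_coneVec_eq_smul hn hDa]
    simp [hj.symm]
  obtain ⟨v, hv⟩ := exists_dotProduct_eq_one hB0
  have hX := derivation_mem_span_pair (isPrime_span_linForm hv)
    (hspan ▸ isPrime_pencilIdeal ha) (hDB ▸ dvd_zero _) (coeffDerivation_map (D j) G) (hspan ▸ hG)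
    hBG
  rw [hspan, h.coeffDerivation_pencilVec] at hX
  have := eval_eq_zero_of_mem_pencilIdeal (ω := Pi.single j 1 - a j • Pi.single s 1)
    (by simp [has]) hX
  simp [coneVec, hj] at this

lemma IsDualFrame.exists_linForm_dvd (h : IsDualFrame D t)
    (hn : 3 ≤ n) (ha : a ≠ 0) {G : MvPolynomial (Fin (n + 2)) k}
    (hG : map (algebraMap k E) G ∈ pencilIdeal t a) :
    ∃ b : Fin (n + 2) → E, b ≠ 0 ∧ b 0 = 0 ∧ linForm b ∣ map (algebraMap k E) G := by
  obtain ⟨s, hs⟩ := Function.ne_iff.1 ha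
  refine h.exists_linForm_dvd_of_apply_eq_one hn (s := s) (a := (a s)⁻¹ • a) (by simp_all) ?_
  rwa [pencilIdeal_smul (isUnit_iff_ne_zero.2 (inv_ne_zero hs))]

end InvariantMember

section Specialization

variable {k E : Type*} [Field k] [IsAlgClosed k]

lemma nonempty_algHom_of_finiteType {A : Type*} [CommRing A] [Nontrivial A] [Algebra k A]
    [Algebra.FiniteType k A] : Nonempty (A →ₐ[k] k) := by
  obtain ⟨m, hm⟩ := Ideal.exists_maximal A
  let _ : Field (A ⧸ m) := Ideal.Quotient.field m
  have : Module.Finite k (A ⧸ m) := finite_of_finite_type_of_isJacobsonRing k (A ⧸ m)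
  exact ⟨(IsAlgClosed.lift : A ⧸ m →ₐ[k] k).comp (Ideal.Quotient.mkₐ k m)⟩

lemma exists_linForm_dvd_of_map [Field E] [Algebra k E] {ι : Type*} [Fintype ι] {b : ι → E}
    (hb : b ≠ 0) {G : MvPolynomial ι k} (h : linForm b ∣ map (algebraMap k E) G) :
    ∃ b' : ι → k, b' ≠ 0 ∧ (∀ i, b i = 0 → b' i = 0) ∧ linForm b' ∣ G := by
  obtain ⟨u, hu⟩ := exists_dotProduct_eq_one hb
  let A := Algebra.adjoin k (Set.range b ∪ Set.range u)
  have : Algebra.FiniteType k A := (Subalgebra.fg_iff_finiteType _).1 <|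
    Subalgebra.fg_def.2 ⟨_, (Set.finite_range b).union (Set.finite_range u), rfl⟩
  obtain ⟨f⟩ := nonempty_algHom_of_finiteType (k := k) (A := A)
  let bA (i : ι) : A := ⟨b i, Algebra.subset_adjoin (.inl ⟨i, rfl⟩)⟩
  let uA (i : ι) : A := ⟨u i, Algebra.subset_adjoin (.inr ⟨i, rfl⟩)⟩
  have huA : bA ⬝ᵥ uA = 1 := Subtype.ext <| by simpa [dotProduct, bA, uA] using hu
  have hA : elimLinForm bA uA (map (algebraMap k A) G) = 0 := by
    apply map_injective (algebraMap A E) Subtype.val_injective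
    rw [map_elimLinForm, map_map, ← IsScalarTower.algebraMap_eq, map_zero]
    exact (linForm_dvd_iff hu).1 h
  have hfu : (f ∘ bA) ⬝ᵥ (f ∘ uA) = 1 := by
    simpa [dotProduct] using congrArg f huA
  refine ⟨f ∘ bA, ?_, fun i hi => ?_, (linForm_dvd_iff hfu).2 ?_⟩
  · intro h0
    simp [h0] at hfu
  · rw [Function.comp_apply, show bA i = 0 from Subtype.ext hi, map_zero]
  · have := congrArg (map (f : A →+* k)) hA
    rwa [map_elimLinForm, map_map, f.comp_algebraMap, map_zero, Algebra.algebraMap_self,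
      map_id] at this

end Specialization

section GenericPoint

universe u v w

open scoped TensorProduct

variable {k κ : Type*} [Field k]

lemma exists_derivation_algebraMap_X {E : Type*} [Field E] [Algebra k E]
    [Algebra (MvPolynomial κ k) E] [IsScalarTower k (MvPolynomial κ k) E]
    [Algebra.FormallyEtale (MvPolynomial κ k) E] (v : κ → E) :
    ∃ D : Derivation k E E, ∀ i, D (algebraMap (MvPolynomial κ k) E (X i)) = v i := by
  let l : E ⊗[MvPolynomial κ k] Ω[MvPolynomial κ k⁄k] →ₗ[E] E :=
    LinearMap.liftBaseChange E (mkDerivation k v).liftKaehlerDifferential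
  let e := KaehlerDifferential.tensorKaehlerEquivOfFormallyEtale k (MvPolynomial κ k) E
  refine ⟨(l ∘ₗ e.symm.toLinearMap).compDer (KaehlerDifferential.D k E), fun i => ?_⟩
  calc l (e.symm (KaehlerDifferential.D k E (algebraMap _ E (X i))))
    _ = l (1 ⊗ₜ KaehlerDifferential.D k (MvPolynomial κ k) (X i)) := by
      rw [KaehlerDifferential.tensorKaehlerEquivOfFormallyEtale_symm_D_algebraMap]
    _ = v i := by simp [l, mkDerivation_X]

lemma derivation_eq_zero_of_algebraMap {S R E : Type*} [CommRing S] [CommRing R] [CommRing E]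
    [Algebra S R] [Algebra S E] [Algebra R E] [IsScalarTower S R E]
    [Algebra.FormallyUnramified R E] {D : Derivation S E E}
    (h : ∀ r, D (algebraMap R E r) = 0) : D = 0 := by
  let D' : Derivation R E E := Derivation.mk'
      { toFun := D
        map_add' := map_add D
        map_smul' r x := by simp [Algebra.smul_def, h] } D.leibniz
  ext x
  calc D x = D'.liftKaehlerDifferential (KaehlerDifferential.D R E x) :=
        (D'.liftKaehlerDifferential_comp_D x).symm
    _ = 0 := by rw [Subsingleton.elim (KaehlerDifferential.D R E x) 0, map_zero]

lemma exists_isDualFrame [DecidableEq κ] {E : Type*} [Field E] [Algebra k E]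
    [Algebra (MvPolynomial κ k) E] [IsScalarTower k (MvPolynomial κ k) E]
    [Algebra.FormallyEtale (MvPolynomial κ k) E] :
    ∃ D : κ → Derivation k E E, IsDualFrame D fun i => algebraMap (MvPolynomial κ k) E (X i) := by
  choose D hD using fun i : κ =>
    exists_derivation_algebraMap_X (k := k) (E := E) (Pi.single i (1 : E))
  refine ⟨D, fun i j x => ?_, fun i => funext (hD i)⟩
  have hX (l) : ⁅D i, D j⁆ (algebraMap (MvPolynomial κ k) E (X l)) = 0 := by
    simp [Derivation.commutator_apply, hD, Pi.single_apply, apply_ite]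
  have hR : ⁅D i, D j⁆.compAlgebraMap (MvPolynomial κ k) = 0 := derivation_ext hX
  have h0 : ⁅D i, D j⁆ = 0 := derivation_eq_zero_of_algebraMap (DFunLike.congr_fun hR)
  rw [← sub_eq_zero, ← Derivation.commutator_apply, h0, Derivation.zero_apply]

lemma formallyEtale_of_fractionRing {R E : Type*} [CommRing R] [IsDomain R] [CharZero R] [Field E]
    [Algebra R E] [Algebra (FractionRing R) E] [IsScalarTower R (FractionRing R) E]
    [Algebra.FiniteType (FractionRing R) E] : Algebra.FormallyEtale R E := by
  have : Module.Finite (FractionRing R) E := finite_of_finite_type_of_isJacobsonRing _ E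
  have : Algebra.FormallyEtale (FractionRing R) E := .of_isSeparable _ E
  have : Algebra.FormallyEtale R (FractionRing R) := .of_isLocalization (nonZeroDivisors R)
  exact .comp R (FractionRing R) E

lemma algebraMap_injective_of_forall_exists_algHom [Infinite k] {B : Type*} [CommRing B]
    [Algebra k B] [Algebra (MvPolynomial κ k) B] [IsScalarTower k (MvPolynomial κ k) B]
    (h : ∀ t : κ → k, ∃ g : B →ₐ[k] k, ∀ i, g (algebraMap (MvPolynomial κ k) B (X i)) = t i) :
    Function.Injective (algebraMap (MvPolynomial κ k) B) := by
  refine (injective_iff_map_eq_zero _).2 fun p hp => MvPolynomial.funext fun t => ?_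
  obtain ⟨g, hg⟩ := h t
  have : g.comp (IsScalarTower.toAlgHom k (MvPolynomial κ k) B) = aeval t := by
    ext i
    simpa using hg i
  rw [map_zero, ← coe_aeval_eq_eval, RingHom.coe_coe, ← this]
  simp [hp]

/-- The residue field of a closed point of the generic fibre of `Spec B → 𝔸^κ` is étale over the
function field of `𝔸^κ`, so the partial derivatives extend to it. -/
lemma exists_algHom_isDualFrame {k : Type u} [Field k] [CharZero k] {κ : Type v} [DecidableEq κ]
    {B : Type w} [CommRing B] [Algebra k B] [Algebra (MvPolynomial κ k) B]
    [IsScalarTower k (MvPolynomial κ k) B] [Algebra.FiniteType (MvPolynomial κ k) B]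
    (h : ∀ t : κ → k, ∃ g : B →ₐ[k] k, ∀ i, g (algebraMap (MvPolynomial κ k) B (X i)) = t i) :
    ∃ (E : Type max u v w) (_ : Field E) (_ : Algebra k E) (D : κ → Derivation k E E)
      (f : B →ₐ[k] E), IsDualFrame D fun i => f (algebraMap (MvPolynomial κ k) B (X i)) := by
  let R := MvPolynomial κ k
  let K := FractionRing R
  have : Module.Flat R K := IsLocalization.flat K (nonZeroDivisors _)
  have : Nontrivial (K ⊗[R] B) := (Algebra.TensorProduct.includeLeft_injective (S := K)
    (algebraMap_injective_of_forall_exists_algHom h)).nontrivial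
  obtain ⟨m, hm⟩ := Ideal.exists_maximal (K ⊗[R] B)
  let E := (K ⊗[R] B) ⧸ m
  let _ : Field E := Ideal.Quotient.field m
  have : Algebra.FormallyEtale R E := formallyEtale_of_fractionRing
  obtain ⟨D, hD⟩ := exists_isDualFrame (k := k) (κ := κ) (E := E)
  let f : B →ₐ[R] E := (Ideal.Quotient.mkₐ R m).comp Algebra.TensorProduct.includeRight
  have hf : (fun i => f (algebraMap R B (X i))) = fun i => algebraMap R E (X i) :=
    funext fun i => f.commutes (X i)
  exact ⟨E, inferInstance, inferInstance, D, f.restrictScalars k, hf ▸ hD⟩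

/-- The relations on `t`, `a`, `u` expressing that `a ⬝ᵥ u = 1` and `f ∈ pencilIdeal t a`. -/
noncomputable def pencilRelations {A : Type*} [CommRing A] {n : ℕ} (t a u : Fin n → A)
    (f : MvPolynomial (Fin (n + 2)) A) : Ideal A :=
  Ideal.span <| insert (a ⬝ᵥ u - 1) <|
    Set.range fun m =>
      (elimLinForm (coneVec 0 a) (coneVec 0 u) (elimLinForm (pencilVec t) (coneVec 1 0) f)).coeff m

lemma pencilRelations_le_ker_iff {A B : Type*} [CommRing A] [CommRing B] {n : ℕ}
    {t a u : Fin n → A} {f : MvPolynomial (Fin (n + 2)) A} {φ : A →+* B} :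
    pencilRelations t a u f ≤ RingHom.ker φ ↔
      (φ ∘ a) ⬝ᵥ (φ ∘ u) = 1 ∧ map φ f ∈ pencilIdeal (φ ∘ t) (φ ∘ a) := by
  have hau : φ (a ⬝ᵥ u - 1) = 0 ↔ (φ ∘ a) ⬝ᵥ (φ ∘ u) = 1 := by
    simp [dotProduct, sub_eq_zero]
  simp only [pencilRelations, Ideal.span_le, Set.insert_subset_iff, Set.range_subset_iff,
    SetLike.mem_coe, RingHom.mem_ker, hau]
  refine and_congr_right fun h => ?_
  have hneg : φ ∘ (-t) = -(φ ∘ t) := by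
    ext i
    simp
  have h0 : φ ∘ (0 : Fin n → A) = 0 := by
    ext i
    simp
  simp only [mem_pencilIdeal_iff h, ← coeff_map, map_elimLinForm, pencilVec, comp_coneVec, map_zero,
    map_one, hneg, h0, MvPolynomial.ext_iff, coeff_zero]

lemma exists_isDualFrame_mem_pencilIdeal {k : Type u} [Field k] [CharZero k] {n : ℕ}
    {G : MvPolynomial (Fin (n + 2)) k}
    (h : ∀ t : Fin n → k, ∃ a u, a ⬝ᵥ u = 1 ∧ G ∈ pencilIdeal t a) :
    ∃ (E : Type u) (_ : Field E) (_ : Algebra k E) (D : Fin n → Derivation k E E)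
      (t a : Fin n → E),
      IsDualFrame D t ∧ a ≠ 0 ∧ map (algebraMap k E) G ∈ pencilIdeal t a := by
  let R := MvPolynomial (Fin n) k
  let A := MvPolynomial (Fin n ⊕ Fin n) R
  let t (i : Fin n) : A := C (X i)
  let a (i : Fin n) : A := X (.inl i)
  let u (i : Fin n) : A := X (.inr i)
  let I : Ideal A := pencilRelations t a u (map (algebraMap k A) G)
  have hgen : ∀ τ : Fin n → k, ∃ g : A ⧸ I →ₐ[k] k, ∀ i, g (algebraMap R (A ⧸ I) (X i)) = τ i := by
    intro τ
    obtain ⟨α, υ, hau, hG⟩ := h τ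
    obtain ⟨g, hgt, hgau⟩ : ∃ g : A →ₐ[k] k,
        (∀ i, g (C (X i)) = τ i) ∧ ∀ j, g (X j) = Sum.elim α υ j :=
      ⟨aevalTower (aeval τ) (Sum.elim α υ),
        fun i => (aevalTower_C _ _ _).trans (aeval_X τ i), fun j => aevalTower_X _ _ j⟩
    have hgt' : g ∘ t = τ := funext hgt
    have hga : g ∘ a = α := funext fun i => hgau (.inl i)
    have hgu : g ∘ u = υ := funext fun i => hgau (.inr i)
    have hI : I ≤ RingHom.ker (g : A →+* k) := by
      refine pencilRelations_le_ker_iff.2 ?_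
      rw [map_map, g.comp_algebraMap, Algebra.algebraMap_self, map_id]
      simpa [hgt', hga, hgu] using ⟨hau, hG⟩
    exact ⟨Ideal.Quotient.liftₐ I g fun x hx => hI hx, hgt⟩
  obtain ⟨E, _, _, D, f, hf⟩ := exists_algHom_isDualFrame hgen
  let F : A →ₐ[k] E := f.comp (Ideal.Quotient.mkₐ k I)
  have hF : I ≤ RingHom.ker (F : A →+* E) := fun x hx => by
    simp [F, Ideal.Quotient.eq_zero_iff_mem.2 hx]
  obtain ⟨hau, hG⟩ := pencilRelations_le_ker_iff.1 hF
  rw [map_map, F.comp_algebraMap] at hG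
  refine ⟨E, inferInstance, inferInstance, D, F ∘ t, F ∘ a, hf, fun ha => ?_, hG⟩
  simp [ha] at hau

end GenericPoint

section LinearAlgebra

variable {k : Type*} [Field k]

lemma exists_linearEquiv_apply_eq {V : Type*} [AddCommGroup V] [Module k V] {x y : V}
    (hx : x ≠ 0) (hy : y ≠ 0) : ∃ ψ : V ≃ₗ[k] V, ψ x = y := by
  obtain ⟨ψ, hψ⟩ := Submodule.exists_linearEquiv_restrict_eq
    (LinearEquiv.coord k V x hx ≪≫ₗ LinearEquiv.toSpanNonzeroSingleton k V y hy)
  refine ⟨ψ, ?_⟩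
  simpa [LinearEquiv.coord_self] using (hψ ⟨x, Submodule.mem_span_singleton_self x⟩).symm

lemma exists_forall_mem_of_finrank_eq {n : ℕ} {t : Fin n → k}
    {W : Submodule k (Fin (n + 2) → k)} (hW : Module.finrank k W = n) (h0 : Pi.single 0 1 ∈ W)
    (ht : ∀ x ∈ W, pencilVec t ⬝ᵥ x = 0) :
    ∃ a ≠ 0, ∀ x, pencilVec t ⬝ᵥ x = 0 → coneVec 0 a ⬝ᵥ x = 0 → x ∈ W := by
  let ℓ := dotProductEquiv k (Fin (n + 2)) (pencilVec t)
  have hℓ0 : ℓ ≠ 0 := fun h => by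
    simpa [pencilVec, coneVec] using congr($((LinearEquiv.map_eq_zero_iff _).1 h) 1)
  have hker : Module.finrank k (LinearMap.ker ℓ) = n + 1 := by
    simpa using Module.Dual.finrank_ker_add_one_of_ne_zero hℓ0
  have hWℓ : W < LinearMap.ker ℓ := lt_of_le_of_ne ht fun h => by
    rw [← h, hW] at hker
    omega
  obtain ⟨v, hvℓ, hvW⟩ := SetLike.exists_of_lt hWℓ
  obtain ⟨γ, hγv, hWγ⟩ := Submodule.exists_le_ker_of_notMem hvW
  obtain ⟨c, rfl⟩ := (dotProductEquiv k (Fin (n + 2))).surjective γ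
  have hWeq : W = LinearMap.ker ℓ ⊓ LinearMap.ker (dotProductEquiv k _ c) := by
    refine Submodule.eq_of_le_of_finrank_le (le_inf hWℓ.le hWγ) ?_
    have : LinearMap.ker ℓ ⊓ LinearMap.ker (dotProductEquiv k _ c) < LinearMap.ker ℓ :=
      inf_le_left.lt_of_ne fun h => hγv (inf_eq_left.1 h hvℓ)
    have := Submodule.finrank_lt_finrank_of_lt this
    omega
  obtain ⟨a, hca⟩ : ∃ a, c = c 1 • pencilVec t + coneVec 0 a := by
    have hc0 : c 0 = 0 := by simpa using hWγ h0
    refine ⟨fun i => c i.succ.succ + c 1 * t i, funext <| Fin.cases ?_ <| Fin.cases ?_ ?_⟩ <;>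
      simp [pencilVec, coneVec, hc0]
  have hc (x) (hx : pencilVec t ⬝ᵥ x = 0) : c ⬝ᵥ x = coneVec 0 a ⬝ᵥ x := by
    rw [hca, add_dotProduct, smul_dotProduct, hx, smul_zero, zero_add]
  refine ⟨a, ?_, fun x hx hax => ?_⟩
  · rintro rfl
    exact hγv <| (hc v hvℓ).trans <| by simp [coneVec]
  · rw [hWeq]
    exact ⟨hx, (hc x hx).trans hax⟩

end LinearAlgebra

section Restriction

lemma mem_pencilIdeal_of_forall_eval_eq_zero {A : Type*} [CommRing A] [IsDomain A] [Infinite A]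
    {n : ℕ} {t a u : Fin n → A} (ha : a ⬝ᵥ u = 1) {f : MvPolynomial (Fin (n + 2)) A}
    (hf : ∀ x, pencilVec t ⬝ᵥ x = 0 → coneVec 0 a ⬝ᵥ x = 0 → eval x f = 0) :
    f ∈ pencilIdeal t a := by
  rw [mem_pencilIdeal_iff ha]
  refine MvPolynomial.funext fun x => ?_
  rw [eval_elimLinForm, eval_elimLinForm, map_zero]
  apply hf <;> simp [dotProduct_sub, pencilVec, coneVec_dotProduct, ha]

lemma eval_restrictPoly {R : Type*} [CommSemiring R] {m n : ℕ} (G : MvPolynomial (Fin m) R)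
    (ψ : (Fin n → R) →ₗ[R] (Fin m → R)) (x : Fin n → R) :
    eval x (restrictPoly G ψ) = eval (ψ x) G := by
  have : ψ x = fun i => ∑ j, ψ (Pi.single j 1) i * x j := by
    rw [← LinearMap.toMatrix'_mulVec ψ]
    ext i
    simp [Matrix.mulVec, dotProduct, LinearMap.toMatrix'_apply]
  rw [restrictPoly, this]
  induction G using MvPolynomial.induction_on <;> simp_all

lemma isHomogeneous_restrictPoly {R : Type*} [CommSemiring R] {m n d : ℕ}
    {G : MvPolynomial (Fin m) R} (hG : G.IsHomogeneous d) (ψ : (Fin n → R) →ₗ[R] (Fin m → R)) :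
    (restrictPoly G ψ).IsHomogeneous d := by
  simpa only [restrictPoly, one_mul] using
    hG.aeval _ fun i => IsHomogeneous.sum _ _ _ fun j _ => isHomogeneous_C_mul_X _ j

lemma restrictPoly_mul {R : Type*} [CommSemiring R] {m n : ℕ} (F G : MvPolynomial (Fin m) R)
    (ψ : (Fin n → R) →ₗ[R] (Fin m → R)) :
    restrictPoly (F * G) ψ = restrictPoly F ψ * restrictPoly G ψ :=
  map_mul _ F G

lemma restrictPoly_dvd {R : Type*} [CommSemiring R] {m n : ℕ} {F G : MvPolynomial (Fin m) R}
    (h : F ∣ G) (ψ : (Fin n → R) →ₗ[R] (Fin m → R)) : restrictPoly F ψ ∣ restrictPoly G ψ :=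
  map_dvd _ h

variable {A : Type*} [CommRing A] [IsDomain A] [Infinite A] {l m n : ℕ}

lemma restrictPoly_restrictPoly (G : MvPolynomial (Fin m) A) (ψ : (Fin n → A) →ₗ[A] (Fin m → A))
    (φ : (Fin l → A) →ₗ[A] (Fin n → A)) :
    restrictPoly (restrictPoly G ψ) φ = restrictPoly G (ψ ∘ₗ φ) :=
  MvPolynomial.funext fun x => by simp only [eval_restrictPoly, LinearMap.comp_apply]

lemma restrictPoly_ne_zero {G : MvPolynomial (Fin m) A} (hG : G ≠ 0)
    {ψ : (Fin n → A) →ₗ[A] (Fin m → A)} (hψ : Function.Surjective ψ) : restrictPoly G ψ ≠ 0 :=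
  fun h => hG <| MvPolynomial.funext <| hψ.forall.2 fun x => by
    rw [← eval_restrictPoly, h, map_zero, map_zero]

end Restriction

section Hyperplanes

variable {k : Type*} [Field k] {n : ℕ}

lemma exists_restrictPoly_mem_pencilIdeal [Infinite k] {G : MvPolynomial (Fin (n + 2)) k}
    (ψ : (Fin (n + 2) → k) ≃ₗ[k] (Fin (n + 2) → k))
    (h : ∀ ℓ : (Fin (n + 2) → k) →ₗ[k] k, ℓ ≠ 0 → ℓ (ψ (Pi.single 0 1)) = 0 →
      ∃ W : Submodule k (Fin (n + 2) → k), Module.finrank k W = n ∧ ψ (Pi.single 0 1) ∈ W ∧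
        ∀ x ∈ W, ℓ x = 0 ∧ eval x G = 0) (t : Fin n → k) :
    ∃ a u, a ⬝ᵥ u = 1 ∧ restrictPoly G ψ ∈ pencilIdeal t a := by
  let ℓ := dotProductEquiv k _ (pencilVec t) ∘ₗ ψ.symm.toLinearMap
  have hℓ (x) : ℓ (ψ x) = pencilVec t ⬝ᵥ x := by simp [ℓ]
  obtain ⟨W, hW, h0, hWG⟩ := h ℓ
    (fun h0 => by simpa [hℓ, pencilVec, coneVec] using congr($h0 (ψ (Pi.single 1 1))))
    (by simp [hℓ, pencilVec, coneVec])
  obtain ⟨a, ha, haW⟩ := exists_forall_mem_of_finrank_eq (W := W.comap ψ.toLinearMap)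
    (by rw [Submodule.comap_equiv_eq_map_symm, LinearEquiv.finrank_map_eq, hW]) h0
    fun x hx => (hℓ x).symm.trans (hWG _ hx).1
  obtain ⟨u, hu⟩ := exists_dotProduct_eq_one ha
  refine ⟨a, u, hu, mem_pencilIdeal_of_forall_eval_eq_zero hu fun x hx hax => ?_⟩
  rw [eval_restrictPoly]
  exact (hWG _ (haW x hx hax)).2

lemma exists_submodule_of_linForm_dvd {G : MvPolynomial (Fin (n + 1)) k}
    {ψ : (Fin (n + 1) → k) ≃ₗ[k] (Fin (n + 1) → k)} {b v : Fin (n + 1) → k} (hb : b ≠ 0)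
    (hbv : b ⬝ᵥ v = 0) (h : linForm b ∣ restrictPoly G ψ) :
    ∃ W : Submodule k (Fin (n + 1) → k), Module.finrank k W = n ∧ ψ v ∈ W ∧
      ∀ x ∈ W, eval x G = 0 := by
  let β := dotProductEquiv k _ b
  refine ⟨(LinearMap.ker β).map ψ.toLinearMap, ?_, Submodule.mem_map_of_mem hbv, ?_⟩
  · have : β ≠ 0 := by simpa [β] using hb
    simpa [LinearEquiv.finrank_map_eq] using Module.Dual.finrank_ker_add_one_of_ne_zero this
  · rintro _ ⟨x, hx, rfl⟩
    have := map_dvd (eval x) h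
    rwa [eval_linForm, show b ⬝ᵥ x = 0 from hx, zero_dvd_iff, eval_restrictPoly] at this

end Hyperplanes

section HomogeneousIdeals

lemma height_eq_one_of_lt_of_lt {R : Type*} [CommRing R] [IsDomain R] [IsNoetherianRing R]
    (hR : ringKrullDim R ≤ 3) {p q m : Ideal R} [p.IsPrime] [q.IsPrime] [m.IsPrime] (hp : p ≠ ⊥)
    (hpq : p < q) (hqm : q < m) : p.height = 1 := by
  have hm : m.height ≤ 3 := by
    have : (m.height : WithBot ℕ∞) ≤ (3 : ℕ∞) := Ideal.height_le_ringKrullDim_of_isPrime.trans hR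
    exact_mod_cast this
  have h : p.height + 1 + 1 ≤ 1 + 1 + 1 :=
    calc p.height + 1 + 1 ≤ q.height + 1 := by
          gcongr
          exact Ideal.height_add_one_le_of_lt_of_isPrime hpq
      _ ≤ m.height := Ideal.height_add_one_le_of_lt_of_isPrime hqm
      _ ≤ 1 + 1 + 1 := hm.trans (by norm_num)
  rw [ENat.add_le_add_iff_right ENat.one_ne_top, ENat.add_le_add_iff_right ENat.one_ne_top] at h
  refine le_antisymm h (Order.one_le_iff_ne_zero.2 ?_)
  rwa [Ne, Ideal.height_eq_zero_iff_eq_bot]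

attribute [local instance] MvPolynomial.gradedAlgebra

variable {σ A B : Type*} [CommRing A] [CommRing B]

lemma isHomogeneous_totalDegree_of_span_singleton [IsDomain A] {f : MvPolynomial σ A}
    (h : (Ideal.span {f}).IsHomogeneous (homogeneousSubmodule σ A)) :
    f.IsHomogeneous f.totalDegree := by
  have hcomp (d) (hd : d ≠ f.totalDegree) : homogeneousComponent d f = 0 := by
    by_contra h0
    have hdvd : f ∣ homogeneousComponent d f := Ideal.mem_span_singleton.1 <|
      homogeneousComponent_mem_of_mem h (Ideal.mem_span_singleton_self f) d
    have hle := totalDegree_le_of_dvd_of_isDomain hdvd h0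
    rw [(homogeneousComponent_isHomogeneous d f).totalDegree h0] at hle
    exact h0 (homogeneousComponent_eq_zero _ _ (hle.lt_of_ne' hd))
  have : homogeneousComponent f.totalDegree f = f := by
    conv_rhs => rw [← sum_homogeneousComponent f]
    exact (Finset.sum_eq_single _ (fun d _ => hcomp d) (by simp)).symm
  have hhom := homogeneousComponent_isHomogeneous f.totalDegree f
  rwa [this] at hhom

lemma map_homogeneousComponent (φ : A →+* B) (d : ℕ) (f : MvPolynomial σ A) :
    map φ (homogeneousComponent d f) = homogeneousComponent d (map φ f) := by
  ext u
  simp only [coeff_map, coeff_homogeneousComponent, apply_ite φ, map_zero]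

lemma isHomogeneous_comap_map {I : Ideal (MvPolynomial σ B)}
    (hI : I.IsHomogeneous (homogeneousSubmodule σ B)) (φ : A →+* B) :
    (I.comap (map φ)).IsHomogeneous (homogeneousSubmodule σ A) := by
  intro d f hf
  have h := homogeneousComponent_mem_of_mem hI hf d
  rwa [← map_homogeneousComponent, ← decomposition.decompose'_apply f d] at h

variable {k E : Type*} [Field k] [IsAlgClosed k] [Field E] [Algebra k E]

lemma not_isMaximal_ker_aeval [Finite σ] {ξ : σ → E} {i : σ}
    (hi : ξ i ∉ Set.range (algebraMap k E)) :
    ¬ (RingHom.ker (aeval ξ : MvPolynomial σ k →ₐ[k] E)).IsMaximal := by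
  intro hmax
  obtain ⟨x, hx⟩ := isMaximal_iff_eq_vanishingIdeal_singleton.1 hmax
  have : X i - C (x i) ∈ RingHom.ker (aeval ξ : MvPolynomial σ k →ₐ[k] E) := by
    rw [hx]
    simp
  refine hi ⟨x i, ?_⟩
  simpa [RingHom.mem_ker, sub_eq_zero, eq_comm (b := ξ i)] using this

/-- Strictly above `p` lie the ideal of the point `ξ` and a maximal ideal, so `p` has height one. -/
lemma exists_isHomogeneous_dvd_of_mem {p : Ideal (MvPolynomial (Fin 3) k)} [p.IsPrime]
    (hp : p ≠ ⊥) (hhom : p.IsHomogeneous (homogeneousSubmodule (Fin 3) k)) {ξ : Fin 3 → E}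
    (hpξ : ∀ f ∈ p, aeval ξ f = 0) {i l : Fin 3} (hl : ξ l = 1)
    (hi : ξ i ∉ Set.range (algebraMap k E)) :
    ∃ (f : MvPolynomial (Fin 3) k) (d : ℕ), 0 < d ∧ f.IsHomogeneous d ∧ ∀ g ∈ p, f ∣ g := by
  set q := RingHom.ker (aeval ξ : MvPolynomial (Fin 3) k →ₐ[k] E) with hq
  have : q.IsPrime := RingHom.ker_isPrime _
  have hpq : p < q := by
    refine lt_of_le_of_ne hpξ fun h => ‹p.IsPrime›.ne_top <| (Ideal.eq_top_iff_one p).2 ?_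
    have hmem : (X l - 1 : MvPolynomial (Fin 3) k) ∈ p := by
      rw [h, hq, RingHom.mem_ker]
      simp [hl]
    simpa [homogeneousComponent_zero] using homogeneousComponent_mem_of_mem hhom hmem 0
  obtain ⟨m, hm, hqm⟩ := Ideal.exists_le_maximal q Ideal.IsPrime.ne_top'
  have hqm' : q < m := hqm.lt_of_ne fun h => not_isMaximal_ker_aeval hi (hq ▸ h ▸ hm)
  have hdim : ringKrullDim (MvPolynomial (Fin 3) k) ≤ 3 := by
    simp [ringKrullDim_of_isNoetherianRing, ringKrullDim_eq_zero_of_field]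
  have := hm.isPrime
  obtain ⟨f, hf⟩ := UniqueFactorizationMonoid.isPrincipal_of_height_eq_one
    (height_eq_one_of_lt_of_lt hdim hp hpq hqm')
  rw [Ideal.submodule_span_eq] at hf
  have hf0 : f ≠ 0 := by
    rintro rfl
    simp [hf] at hp
  refine ⟨f, f.totalDegree, ?_, isHomogeneous_totalDegree_of_span_singleton (hf ▸ hhom),
    fun g hg => Ideal.mem_span_singleton.1 (hf ▸ hg)⟩
  refine Nat.pos_of_ne_zero fun h0 => ‹p.IsPrime›.ne_top ?_
  rw [totalDegree_eq_zero_iff_eq_C] at h0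
  have : f.coeff 0 ≠ 0 := by
    intro h
    rw [h, C_0] at h0
    exact hf0 h0
  rw [hf, Ideal.span_singleton_eq_top, h0]
  exact (isUnit_iff_ne_zero.2 this).map C

end HomogeneousIdeals

section Cone

variable {A B : Type*} [CommRing A] [CommRing B] {n : ℕ}

lemma rename_succ_linForm (b : Fin n → A) :
    rename Fin.succ (linForm b) = linForm (Matrix.vecCons 0 b) := by
  simp [linForm_apply, Fin.sum_univ_succ]

lemma finSuccEquiv_rename_succ (f : MvPolynomial (Fin n) A) :
    finSuccEquiv A n (rename Fin.succ f) = Polynomial.C f := by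
  induction f using MvPolynomial.induction_on with
  | C a => simp [finSuccEquiv_apply]
  | add p q hp hq => simp only [map_add, hp, hq]
  | mul_X p i hp => simp only [map_mul, hp, rename_X, finSuccEquiv_X_succ]

lemma rename_succ_dvd_iff {f : MvPolynomial (Fin n) A} {G : MvPolynomial (Fin (n + 1)) A} :
    rename Fin.succ f ∣ G ↔ ∀ j, f ∣ (finSuccEquiv A n G).coeff j := by
  rw [← Polynomial.C_dvd_iff_dvd_coeff, ← finSuccEquiv_rename_succ, map_dvd_iff]

lemma coeff_finSuccEquiv_map (φ : A →+* B) (G : MvPolynomial (Fin (n + 1)) A) (j : ℕ) :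
    (finSuccEquiv B n (map φ G)).coeff j = map φ ((finSuccEquiv A n G).coeff j) := by
  ext u
  simp only [finSuccEquiv_coeff_coeff, coeff_map]

lemma coeff_finSuccEquiv_mem {I : Ideal (MvPolynomial (Fin n) A)}
    {G : MvPolynomial (Fin (n + 1)) A} (hG : G ∈ I.map (rename Fin.succ)) (j : ℕ) :
    (finSuccEquiv A n G).coeff j ∈ I := by
  have hle : I.map (rename Fin.succ) ≤ (I.map Polynomial.C).comap (finSuccEquiv A n) :=
    Ideal.map_le_iff_le_comap.2 fun f hf => by
      rw [Ideal.mem_comap, Ideal.mem_comap, finSuccEquiv_rename_succ]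
      exact Ideal.mem_map_of_mem _ hf
  exact Ideal.mem_map_C_iff.1 (hle hG) j

end Cone

section Curve

attribute [local instance] MvPolynomial.gradedAlgebra

variable {A : Type*} [CommRing A] {n : ℕ}

/-- The ideal, in the coordinates `(y, x₁, …, xₙ)`, of the linear space over which
`pencilIdeal t a` is a cone with vertex `(1, 0, …, 0)`. -/
noncomputable def pencilBaseIdeal (t a : Fin n → A) : Ideal (MvPolynomial (Fin (n + 1)) A) :=
  Ideal.span {linForm (Matrix.vecCons 1 (-t)), linForm (Matrix.vecCons 0 a)}

lemma map_pencilBaseIdeal (t a : Fin n → A) :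
    (pencilBaseIdeal t a).map (rename Fin.succ) = pencilIdeal t a := by
  rw [pencilBaseIdeal, Ideal.map_span, Set.image_pair, rename_succ_linForm, rename_succ_linForm]
  rfl

lemma isPrime_pencilBaseIdeal [IsDomain A] {t a u : Fin n → A} (ha : a ⬝ᵥ u = 1) :
    (pencilBaseIdeal t a).IsPrime :=
  isPrime_span_linForm_pair (v := Matrix.vecCons 1 0) (by simp) (u := Matrix.vecCons 0 u)
    (by simp [ha]) (by simp)

lemma isHomogeneous_pencilBaseIdeal (t a : Fin n → A) :
    (pencilBaseIdeal t a).IsHomogeneous (homogeneousSubmodule (Fin (n + 1)) A) := by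
  refine Ideal.homogeneous_span _ _ ?_
  rintro _ (rfl | rfl) <;> exact ⟨1, isHomogeneous_linForm _⟩

lemma eval_eq_zero_of_mem_pencilBaseIdeal {t a ω : Fin n → A} (hω : a ⬝ᵥ ω = 0)
    {f : MvPolynomial (Fin (n + 1)) A} (hf : f ∈ pencilBaseIdeal t a) :
    eval (Matrix.vecCons (t ⬝ᵥ ω) ω) f = 0 := by
  obtain ⟨p, q, rfl⟩ := Ideal.mem_span_pair.1 hf
  simp [eval_linForm, hω]

lemma exists_dotProduct_eq_zero_and_apply_eq_one {K : Type*} [Field K] (a : Fin 2 → K) :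
    ∃ ω l, a ⬝ᵥ ω = 0 ∧ ω l = 1 := by
  obtain h | h := eq_or_ne (a 0) 0
  · exact ⟨![1, 0], 0, by simp [dotProduct, h], rfl⟩
  · exact ⟨![-(a 1 / a 0), 1], 1, by simp [dotProduct, mul_div_cancel₀ _ h], rfl⟩

variable {k E : Type*} [Field k] [Field E] [Algebra k E]

/-- Otherwise `ω l = D l (t ⬝ᵥ ω) = 0`. -/
lemma IsDualFrame.exists_notMem_range {D : Fin n → Derivation k E E} {t ω : Fin n → E}
    (h : IsDualFrame D t) {l : Fin n} (hω : ω l ≠ 0) :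
    ∃ i, (Matrix.vecCons (t ⬝ᵥ ω) ω : Fin (n + 1) → E) i ∉ Set.range (algebraMap k E) := by
  by_contra! hc
  have hD (i) : D l ((Matrix.vecCons (t ⬝ᵥ ω) ω : Fin (n + 1) → E) i) = 0 := by
    obtain ⟨c, hc⟩ := hc i
    rw [← hc, Derivation.map_algebraMap]
  have hDω (i) : D l (ω i) = 0 := hD i.succ
  have hDt (i) : D l (t i) = (Pi.single l 1 : Fin n → E) i := congrFun (h.comp_eq_single l) i
  exact hω <| by simpa [dotProduct, hDω, hDt, Pi.single_apply] using hD 0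

/-- The section is now a line through the vertex, so it gives a point of the base of the cone; the
closure of that point is a curve. -/
lemma IsDualFrame.exists_rename_succ_dvd [IsAlgClosed k] {D : Fin 2 → Derivation k E E}
    {t a : Fin 2 → E} (h : IsDualFrame D t) (ha : a ≠ 0) {G : MvPolynomial (Fin 4) k} (hG0 : G ≠ 0)
    (hG : map (algebraMap k E) G ∈ pencilIdeal t a) :
    ∃ (f : MvPolynomial (Fin 3) k) (d : ℕ), 0 < d ∧ f.IsHomogeneous d ∧ rename Fin.succ f ∣ G := by
  obtain ⟨u, hu⟩ := exists_dotProduct_eq_one ha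
  obtain ⟨ω, l, haω, hωl⟩ := exists_dotProduct_eq_zero_and_apply_eq_one a
  obtain ⟨i, hi⟩ := h.exists_notMem_range (hωl ▸ one_ne_zero)
  let p := (pencilBaseIdeal t a).comap (map (algebraMap k E))
  have hGp (j) : (finSuccEquiv k 3 G).coeff j ∈ p := by
    rw [Ideal.mem_comap, ← coeff_finSuccEquiv_map]
    exact coeff_finSuccEquiv_mem (map_pencilBaseIdeal t a ▸ hG) j
  have hp : p ≠ ⊥ := fun hp => hG0 <| (map_eq_zero_iff _ (finSuccEquiv k 3).injective).1 <|
    Polynomial.ext fun j => by simpa [hp] using hGp j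
  have := isPrime_pencilBaseIdeal (t := t) hu
  obtain ⟨f, d, hd, hf, hfp⟩ := exists_isHomogeneous_dvd_of_mem hp
    (isHomogeneous_comap_map (isHomogeneous_pencilBaseIdeal t a) _)
    (fun f hf => by
      rw [← eval_eq_zero_of_mem_pencilBaseIdeal haω hf, eval_map, aeval_def])
    (l := l.succ) hωl hi
  exact ⟨f, d, hd, hf, rename_succ_dvd_iff.2 fun j => hfp _ (hGp j)⟩

end Curve

section BinaryForms

variable {k : Type*} [Field k]

lemma exists_eq_linForm_of_isHomogeneous {ι A : Type*} [Fintype ι] [CommRing A]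
    {f : MvPolynomial ι A} (hf : f.IsHomogeneous 1) : ∃ c, f = linForm c := by
  classical
  refine ⟨fun i => f.coeff (Finsupp.single i 1), ?_⟩
  ext u
  by_cases hu : u.degree = 1
  · obtain ⟨i, rfl⟩ := (Finsupp.sum_eq_one_iff u).1 hu
    simp [linForm_apply, coeff_sum, coeff_C_mul, coeff_X, Finsupp.single_left_inj]
  · rw [hf.coeff_eq_zero hu, (isHomogeneous_linForm _).coeff_eq_zero hu]

/-- Dehomogenise, and split off a root or, if there is none, the point at infinity. -/
lemma exists_eq_mul_of_isHomogeneous_succ [IsAlgClosed k] {q : MvPolynomial (Fin 2) k} {d : ℕ}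
    (hq : q.IsHomogeneous (d + 1)) :
    ∃ l q' : MvPolynomial (Fin 2) k,
      l ≠ 0 ∧ l.IsHomogeneous 1 ∧ q'.IsHomogeneous d ∧ q = l * q' := by
  obtain ⟨p, hpdeg, rfl⟩ : ∃ p : Polynomial k, p.natDegree ≤ d + 1 ∧ p.homogenize (d + 1) = q := by
    refine ⟨aeval ![Polynomial.X, 1] q, ?_, Polynomial.homogenize_eq_of_isHomogeneous hq rfl⟩
    simpa using aeval_natDegree_le (n := 1) q hq.totalDegree_le ![(Polynomial.X : Polynomial k), 1]
      fun i => by fin_cases i <;> simp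
  by_cases hroot : ∃ r, p.IsRoot r
  · obtain ⟨r, hr⟩ := hroot
    obtain ⟨p', rfl⟩ := Polynomial.dvd_iff_isRoot.2 hr
    have hp' : p'.natDegree ≤ d := by
      obtain rfl | hp'0 := eq_or_ne p' 0
      · simp
      rw [Polynomial.natDegree_mul (Polynomial.X_sub_C_ne_zero r) hp'0,
        Polynomial.natDegree_X_sub_C] at hpdeg
      lia
    refine ⟨(Polynomial.X - Polynomial.C r).homogenize 1, p'.homogenize d, ?_,
      Polynomial.isHomogeneous_homogenize _, Polynomial.isHomogeneous_homogenize _, ?_⟩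
    · rw [Ne, Polynomial.homogenize_eq_zero_iff (by simp)]
      exact Polynomial.X_sub_C_ne_zero r
    · rw [add_comm d 1, Polynomial.homogenize_mul _ _ (by simp) hp']
  · have hp0 : p.degree = 0 := by_contra fun h => hroot (IsAlgClosed.exists_root p h)
    rw [Polynomial.eq_C_of_degree_eq_zero hp0]
    refine ⟨X 1, C (p.coeff 0) * X 1 ^ d, X_ne_zero _, isHomogeneous_X _ _, ?_, ?_⟩
    · simpa using (isHomogeneous_C _ (p.coeff 0)).mul (isHomogeneous_X_pow (1 : Fin 2) d)
    · rw [Polynomial.homogenize_C]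
      ring

lemma exists_comp_eq_of_apply_eq_zero {V : Type*} [AddCommGroup V] [Module k V] {n : ℕ}
    {p : Fin (n + 1) → k} (hp : p ≠ 0) {M : (Fin (n + 1) → k) →ₗ[k] V} (hM : M p = 0) :
    ∃ (Q : (Fin (n + 1) → k) →ₗ[k] (Fin n → k)) (N : (Fin n → k) →ₗ[k] V),
      Function.Surjective Q ∧ Q p = 0 ∧ N ∘ₗ Q = M := by
  have hfinrank : Module.finrank k ((Fin (n + 1) → k) ⧸ k ∙ p) = Module.finrank k (Fin n → k) := by
    have := Submodule.finrank_quotient_add_finrank (k ∙ p)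
    rw [finrank_span_singleton hp, Module.finrank_fin_fun] at this
    rw [Module.finrank_fin_fun]
    exact Nat.succ_injective this
  let e := LinearEquiv.ofFinrankEq _ _ hfinrank
  refine ⟨e ∘ₗ (k ∙ p).mkQ, (k ∙ p).liftQ M (by simpa using hM) ∘ₗ e.symm,
    e.surjective.comp (Submodule.mkQ_surjective _), by simp, ?_⟩
  ext
  simp

variable [IsAlgClosed k]

/-- A plane curve that is a cone with vertex `p` consists of lines through `p`. -/
lemma exists_mul_dvd_restrictPoly {m d : ℕ} {f : MvPolynomial (Fin m) k}
    (hf : f.IsHomogeneous (d + 2)) {M : (Fin 3 → k) →ₗ[k] (Fin m → k)} {p : Fin 3 → k} (hp : p ≠ 0)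
    (hM : M p = 0) :
    ∃ l₁ l₂ : MvPolynomial (Fin 3) k, (∀ l ∈ [l₁, l₂], l ≠ 0 ∧ l.IsHomogeneous 1 ∧ eval p l = 0) ∧
      l₁ * l₂ ∣ restrictPoly f M := by
  have : Infinite k := IsAlgClosed.instInfinite
  obtain ⟨Q, N, hQ, hQp, rfl⟩ := exists_comp_eq_of_apply_eq_zero hp hM
  obtain ⟨l₁, q₁, hl₁, hl₁', hq₁, h₁⟩ :=
    exists_eq_mul_of_isHomogeneous_succ (isHomogeneous_restrictPoly hf N)
  obtain ⟨l₂, q₂, hl₂, hl₂', -, rfl⟩ := exists_eq_mul_of_isHomogeneous_succ hq₁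
  have hl {l : MvPolynomial (Fin 2) k} (h0 : l ≠ 0) (h1 : l.IsHomogeneous 1) :
      restrictPoly l Q ≠ 0 ∧ (restrictPoly l Q).IsHomogeneous 1 ∧
        eval p (restrictPoly l Q) = 0 := by
    refine ⟨restrictPoly_ne_zero h0 hQ, isHomogeneous_restrictPoly h1 Q, ?_⟩
    obtain ⟨c, rfl⟩ := exists_eq_linForm_of_isHomogeneous h1
    rw [eval_restrictPoly, hQp, eval_linForm, dotProduct_zero]
  refine ⟨restrictPoly l₁ Q, restrictPoly l₂ Q, by simp [hl hl₁ hl₁', hl hl₂ hl₂'], ?_⟩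
  rw [← restrictPoly_restrictPoly, h₁, ← mul_assoc, ← restrictPoly_mul]
  exact restrictPoly_dvd (dvd_mul_right _ _) Q

lemma eq_one_of_rename_succ_dvd {G : MvPolynomial (Fin 4) k} {f : MvPolynomial (Fin 3) k} {d : ℕ}
    (hd : 0 < d) (hf : f.IsHomogeneous d) (hfG : rename Fin.succ f ∣ G)
    {φ : (Fin 3 → k) →ₗ[k] (Fin 4 → k)} {p : Fin 3 → k} (hp : φ p = Pi.single 0 1)
    {lam : MvPolynomial (Fin 3) k} (hlam : ¬ lam ^ 2 ∣ restrictPoly G φ)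
    (huniq : ∀ l : MvPolynomial (Fin 3) k, l ≠ 0 → l.IsHomogeneous 1 → l ∣ restrictPoly G φ →
      eval p l = 0 → ∃ c : k, l = c • lam) : d = 1 := by
  have : Infinite k := IsAlgClosed.instInfinite
  by_contra hd1
  obtain ⟨d, rfl⟩ := Nat.exists_eq_add_of_le' (show 2 ≤ d by lia)
  have hp0 : p ≠ 0 := by
    rintro rfl
    simpa using congrFun hp 0
  let M := LinearMap.funLeft k k Fin.succ ∘ₗ φ
  have hrename : restrictPoly (rename Fin.succ f) φ = restrictPoly f M :=
    MvPolynomial.funext fun x => by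
      rw [eval_restrictPoly, eval_restrictPoly, eval_rename]
      rfl
  obtain ⟨l₁, l₂, hl, hdvd⟩ := exists_mul_dvd_restrictPoly hf (M := M) hp0 <| by
    ext i
    simp [M, hp, LinearMap.funLeft_apply]
  replace hdvd := hdvd.trans (hrename ▸ restrictPoly_dvd hfG φ)
  have hlam_dvd {l} (hmem : l ∈ [l₁, l₂]) (h : l ∣ restrictPoly G φ) : lam ∣ l := by
    obtain ⟨h0, h1, hlp⟩ := hl l hmem
    obtain ⟨c, rfl⟩ := huniq l h0 h1 h hlp
    exact dvd_smul_of_dvd c dvd_rfl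
  refine hlam (dvd_trans ?_ hdvd)
  rw [sq]
  exact mul_dvd_mul (hlam_dvd (by simp) (dvd_of_mul_right_dvd hdvd))
    (hlam_dvd (by simp) (dvd_of_mul_left_dvd hdvd))

end BinaryForms

section Pencils

universe u

variable {k : Type u} [Field k] [IsAlgClosed k] [CharZero k]

lemma exists_linForm_dvd_of_forall_mem_pencilIdeal {n : ℕ} (hn : 3 ≤ n)
    {G : MvPolynomial (Fin (n + 2)) k}
    (hG : ∀ t : Fin n → k, ∃ a u, a ⬝ᵥ u = 1 ∧ G ∈ pencilIdeal t a) :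
    ∃ b : Fin (n + 2) → k, b ≠ 0 ∧ b 0 = 0 ∧ linForm b ∣ G := by
  obtain ⟨E, _, _, D, t, a, h, ha, hGE⟩ := exists_isDualFrame_mem_pencilIdeal hG
  have : CharZero E := charZero_of_injective_algebraMap (algebraMap k E).injective
  obtain ⟨B, hB, hB0, hBG⟩ := h.exists_linForm_dvd hn ha hGE
  obtain ⟨b, hb, hBb, hbG⟩ := exists_linForm_dvd_of_map hB hBG
  exact ⟨b, hb, hBb 0 hB0, hbG⟩

lemma exists_linForm_dvd_of_forall_mem_pencilIdeal_of_unique {G : MvPolynomial (Fin 4) k}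
    (hG : ∀ t : Fin 2 → k, ∃ a u, a ⬝ᵥ u = 1 ∧ G ∈ pencilIdeal t a)
    {φ : (Fin 3 → k) →ₗ[k] (Fin 4 → k)} {p : Fin 3 → k} (hp : φ p = Pi.single 0 1)
    {lam : MvPolynomial (Fin 3) k} (hlam : ¬ lam ^ 2 ∣ restrictPoly G φ)
    (huniq : ∀ l : MvPolynomial (Fin 3) k, l ≠ 0 → l.IsHomogeneous 1 → l ∣ restrictPoly G φ →
      eval p l = 0 → ∃ c : k, l = c • lam) :
    ∃ b : Fin 4 → k, b ≠ 0 ∧ b 0 = 0 ∧ linForm b ∣ G := by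
  have hG0 : G ≠ 0 := by
    rintro rfl
    exact hlam ((dvd_zero _).trans (restrictPoly_dvd (dvd_refl 0) φ))
  obtain ⟨E, _, _, D, t, a, h, ha, hGE⟩ := exists_isDualFrame_mem_pencilIdeal hG
  obtain ⟨f, d, hd, hf, hfG⟩ := h.exists_rename_succ_dvd ha hG0 hGE
  obtain rfl := eq_one_of_rename_succ_dvd hd hf hfG hp hlam huniq
  obtain ⟨c, rfl⟩ := exists_eq_linForm_of_isHomogeneous hf
  rw [rename_succ_linForm] at hfG
  refine ⟨Matrix.vecCons 0 c, fun h0 => ?_, rfl, hfG⟩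
  rw [h0, map_zero, zero_dvd_iff] at hfG
  exact hG0 hfG

end Pencils

theorem stmt_15_general (k : Type*) [Field k] [IsAlgClosed k] [CharZero k] (r : ℕ) (hr : 3 ≤ r)
    (G : MvPolynomial (Fin (r + 1)) k) (P : Fin (r + 1) → k) (hP0 : P ≠ 0)
    (hhyp : ∀ ℓ : (Fin (r + 1) → k) →ₗ[k] k, ℓ ≠ 0 → ℓ P = 0 →
      ∃ W : Submodule k (Fin (r + 1) → k), Module.finrank k W = r - 1 ∧ P ∈ W ∧
        ∀ x ∈ W, ℓ x = 0 ∧ eval x G = 0)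
    (hr3 : r = 3 → ∃ (φ : (Fin 3 → k) →ₗ[k] (Fin (r + 1) → k)) (p : Fin 3 → k)
      (lam : MvPolynomial (Fin 3) k), φ p = P ∧ ¬ lam ^ 2 ∣ restrictPoly G φ ∧
        ∀ lam' : MvPolynomial (Fin 3) k, lam' ≠ 0 → lam'.IsHomogeneous 1 →
          lam' ∣ restrictPoly G φ → eval p lam' = 0 → ∃ c : k, lam' = c • lam) :
    ∃ W : Submodule k (Fin (r + 1) → k), Module.finrank k W = r ∧ P ∈ W ∧
      ∀ x ∈ W, eval x G = 0 := by
  have : Infinite k := IsAlgClosed.instInfinite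
  obtain ⟨n, rfl⟩ := Nat.exists_eq_add_of_le' (show 1 ≤ r by lia)
  obtain ⟨ψ, rfl⟩ := exists_linearEquiv_apply_eq (k := k)
    (Pi.single_ne_zero_iff.2 one_ne_zero : Pi.single (0 : Fin (n + 2)) (1 : k) ≠ 0) hP0
  have hG := exists_restrictPoly_mem_pencilIdeal ψ hhyp
  obtain ⟨b, hb, hb0, hbG⟩ : ∃ b : Fin (n + 2) → k,
      b ≠ 0 ∧ b 0 = 0 ∧ linForm b ∣ restrictPoly G ψ.toLinearMap := by
    obtain hn | rfl : 3 ≤ n ∨ n = 2 := by lia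
    · exact exists_linForm_dvd_of_forall_mem_pencilIdeal hn hG
    · obtain ⟨φ, p, lam, hp, hlam, huniq⟩ := hr3 rfl
      have hφ : restrictPoly (restrictPoly G ψ.toLinearMap) (ψ.symm.toLinearMap ∘ₗ φ) =
          restrictPoly G φ := by
        rw [restrictPoly_restrictPoly, ← LinearMap.comp_assoc]
        simp
      rw [← hφ] at hlam huniq
      exact exists_linForm_dvd_of_forall_mem_pencilIdeal_of_unique hG (by simp [hp]) hlam huniq
  exact exists_submodule_of_linForm_dvd hb (by simp [hb0]) hbG

/-- Lemma 7.1 of Salberger: let `Z = {G = 0} ⊂ P^r`, `r ≥ 3`, be a (possibly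
non-reduced or reducible) hypersurface over an algebraically closed field of
characteristic `0` and `P` a point of `Z` such that every hyperplane section of `Z`
through `P` contains an `(r-2)`-plane through `P`.  If `r = 3`, suppose also that some
plane `Π = ker ℓ₀` through `P` is such that there is (up to scalars) exactly one line on
`Π ∩ Z` through `P`, and this line is simple on `Π ∩ Z`.  Then there is an
`(r-1)`-plane on `Z` through `P`. -/
theorem stmt_15 (k : Type*) [Field k] [IsAlgClosed k] [CharZero k] (r : ℕ) (hr : 3 ≤ r)
    (G : MvPolynomial (Fin (r + 1)) k) (hG0 : G ≠ 0) (e : ℕ) (he : 0 < e)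
    (hhom : G.IsHomogeneous e)
    (P : Fin (r + 1) → k) (hP0 : P ≠ 0) (hPG : eval P G = 0)
    (hhyp : ∀ ℓ : (Fin (r + 1) → k) →ₗ[k] k, ℓ ≠ 0 → ℓ P = 0 →
      ∃ W : Submodule k (Fin (r + 1) → k), Module.finrank k W = r - 1 ∧ P ∈ W ∧
        ∀ x ∈ W, ℓ x = 0 ∧ eval x G = 0)
    (hr3 : r = 3 → ∃ ℓ₀ : (Fin (r + 1) → k) →ₗ[k] k, ℓ₀ ≠ 0 ∧ ℓ₀ P = 0 ∧
      ∃ φ : (Fin 3 → k) ≃ₗ[k] (LinearMap.ker ℓ₀), ∃ hPker : P ∈ LinearMap.ker ℓ₀,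
      ∃ lam : MvPolynomial (Fin 3) k, lam ≠ 0 ∧ lam.IsHomogeneous 1 ∧
        lam ∣ restrictPoly G ((LinearMap.ker ℓ₀).subtype.comp φ.toLinearMap) ∧
        eval (φ.symm ⟨P, hPker⟩) lam = 0 ∧
        ¬ (lam ^ 2 ∣ restrictPoly G ((LinearMap.ker ℓ₀).subtype.comp φ.toLinearMap)) ∧
        ∀ lam' : MvPolynomial (Fin 3) k, lam' ≠ 0 → lam'.IsHomogeneous 1 →
          lam' ∣ restrictPoly G ((LinearMap.ker ℓ₀).subtype.comp φ.toLinearMap) →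
          eval (φ.symm ⟨P, hPker⟩) lam' = 0 →
          ∃ c : k, lam' = c • lam) :
    ∃ W : Submodule k (Fin (r + 1) → k), Module.finrank k W = r ∧ P ∈ W ∧
      ∀ x ∈ W, eval x G = 0 := by
  refine stmt_15_general k r hr G P hP0 hhyp fun h => ?_
  obtain ⟨ℓ₀, -, -, φ, hP, lam, -, -, -, -, hlam, huniq⟩ := hr3 h
  exact ⟨(LinearMap.ker ℓ₀).subtype ∘ₗ φ, φ.symm ⟨P, hP⟩, lam, by simp, hlam, huniq⟩
end

section
/- Let k be a field with algebraic closure k̄, let I ⊂ k[x_0,…,x_n] be a homogeneous prime ideal such that the Krull dimension of k[x_0,…,x_n]/I is r+1 with r ≥ 1 (so X = Proj(k[x_0,…,x_n]/I) is an integral closed subscheme of P^n_k of dimension r), and let V ⊆ k̄^{n+1} be the common zero set of I over k̄. Then the following are equivalent: (a) every nonzero x ∈ V lies in an r-dimensional k̄-linear subspace W of k̄^{n+1} with W ⊆ V; (b) there are infinitely many r-dimensional k̄-linear subspaces W of k̄^{n+1} with W ⊆ V. -/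
open MvPolynomial

/-!
If the linear subspaces covering the zero locus `V` were finitely many, primality of `I` would put
the ideal of one of them inside `I`, against the dimension.

Conversely, infinitely many of the planes in `V` share a set of pivot columns. Their generic points
taken together are a point of `V` on a plane in `V`, over the product of their coordinate rings,
and a polynomial vanishing at it lies in `I`: otherwise it would cut `V` in dimension `r`, where
only finitely many planes fit. A suitable residue field of the product gives a plane in `V` through
the generic point of `V`. It specialises to a plane through any given point of `V` along a
valuation ring, after normalising the frame at its largest maximal minor, and the Nullstellensatz
brings that plane down to `K`.
-/

open scoped Matrix

section Dimension

variable {R S T : Type*} [CommRing R] [CommRing S] [CommRing T]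

theorem ringKrullDim_le_of_isIntegral {f : R →+* S} (hf : f.IsIntegral) :
    ringKrullDim S ≤ ringKrullDim R := by
  algebraize [f]
  exact Order.krullDim_le_of_strictMono (PrimeSpectrum.comap (algebraMap R S))
    fun _ _ h => Ideal.IsIntegral.comap_lt_comap h

theorem ringKrullDim_quotient_map_le_of_isIntegral {f : R →+* S} (hf : f.IsIntegral)
    (J : Ideal R) : ringKrullDim (S ⧸ J.map f) ≤ ringKrullDim (R ⧸ J) := by
  refine ringKrullDim_le_of_isIntegral (f := Ideal.quotientMap _ f Ideal.le_comap_map) ?_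
  refine RingHom.IsIntegral.tower_top (Ideal.Quotient.mk J) _ ?_
  rw [Ideal.quotientMap_comp_mk]
  exact hf.trans _ _ (RingHom.isIntegral_of_surjective _ Ideal.Quotient.mk_surjective)

theorem ringKrullDim_quotient_ker_le_of_isIntegral_comp {f : R →+* S} {g : S →+* T}
    (h : (g.comp f).IsIntegral) : ringKrullDim (S ⧸ RingHom.ker g) ≤ ringKrullDim R :=
  ringKrullDim_le_of_isIntegral (f := (Ideal.Quotient.mk (RingHom.ker g)).comp f) <|
    RingHom.IsIntegral.tower_bot _ g.kerLift g.kerLift_injective h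

theorem ringKrullDim_quotient_succ_le_of_lt {P Q : Ideal R} [P.IsPrime] (h : P < Q) :
    ringKrullDim (R ⧸ Q) + 1 ≤ ringKrullDim (R ⧸ P) := by
  obtain ⟨a, haQ, haP⟩ := SetLike.exists_of_lt h
  exact ringKrullDim_succ_le_of_surjective _ (Ideal.Quotient.factor_surjective h.le)
    (mem_nonZeroDivisors_of_ne_zero (mt Ideal.Quotient.eq_zero_iff_mem.1 haP))
    (Ideal.Quotient.eq_zero_iff_mem.2 haQ)

theorem isIntegral_mvPolynomialMap {f : R →+* S} (hf : f.IsIntegral) (σ : Type*) :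
    (MvPolynomial.map (σ := σ) f).IsIntegral := by
  algebraize [f]
  let := MvPolynomial.algebraMvPolynomial (R := R) (S := S) (σ := σ)
  exact fun p => isIntegral_iff_isIntegral_coeff.2 fun _ => Algebra.IsIntegral.isIntegral _

theorem mem_minimalPrimes_of_ringKrullDim_quotient_le {J Q : Ideal R} [Q.IsPrime]
    (hJQ : J ≤ Q) {d : ℕ} (hJ : ringKrullDim (R ⧸ J) ≤ d) (hQ : d ≤ ringKrullDim (R ⧸ Q)) :
    Q ∈ J.minimalPrimes := by
  refine ⟨⟨‹_›, hJQ⟩, fun P ⟨hP, hJP⟩ hPQ => ?_⟩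
  by_contra hQP
  have hsucc : ((d + 1 : ℕ) : WithBot ℕ∞) ≤ d := calc
    ((d + 1 : ℕ) : WithBot ℕ∞) ≤ ringKrullDim (R ⧸ Q) + 1 := by push_cast; gcongr
    _ ≤ ringKrullDim (R ⧸ P) := ringKrullDim_quotient_succ_le_of_lt (lt_of_le_not_ge hPQ hQP)
    _ ≤ ringKrullDim (R ⧸ J) :=
      ringKrullDim_le_of_surjective _ (Ideal.Quotient.factor_surjective hJP)
    _ ≤ d := hJ
  exact absurd (Nat.cast_le.1 hsucc) (Nat.not_succ_le_self d)

end Dimension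

section Frames

variable {F R ι σ : Type*} [Field F] [CommRing R] [DecidableEq ι]

theorem linearIndependent_row_of_submatrix_eq_one {w : Matrix ι σ R} {e : ι → σ}
    (hw : w.submatrix id e = 1) : LinearIndependent R w.row := by
  refine LinearIndependent.of_comp (LinearMap.funLeft R R e) ?_
  have hrow : LinearMap.funLeft R R e ∘ w.row = fun i => Pi.single i 1 :=
    funext₂ fun i j => (congrFun₂ hw i j).trans Matrix.one_eq_pi_single
  rw [hrow]
  exact Pi.linearIndependent_single_one ι R

variable [Fintype ι]

theorem exists_isUnit_det_submatrix {w : Matrix ι σ F} (hw : LinearIndependent F w.row) :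
    ∃ e : ι → σ, IsUnit (w.submatrix id e).det := by
  have hspan : Submodule.span F (Set.range w.col) = ⊤ :=
    span_flip_eq_top_iff_linearIndependent.2 hw
  obtain ⟨τ, a, -, hτspan, hτ⟩ := exists_linearIndependent' F w.col
  let b : Module.Basis τ F (ι → F) := .mk hτ (hτspan.trans hspan).ge
  let s : ι ≃ τ := (Pi.basisFun F ι).indexEquiv b
  refine ⟨a ∘ s, (Matrix.isUnit_iff_isUnit_det _).1 ?_⟩
  exact Matrix.linearIndependent_cols_iff_isUnit.1 (hτ.comp s s.injective)

theorem finrank_span_range_row_of_submatrix_eq_one [Nontrivial R] {w : Matrix ι σ R} {e : ι → σ}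
    (hw : w.submatrix id e = 1) :
    Module.finrank R (Submodule.span R (Set.range w.row)) = Fintype.card ι :=
  finrank_span_eq_card (linearIndependent_row_of_submatrix_eq_one hw)

theorem submatrix_inv_mul_eq_one {w : Matrix ι σ R} {e : ι → σ}
    (he : IsUnit (w.submatrix id e).det) :
    ((w.submatrix id e)⁻¹ * w).submatrix id e = 1 := by
  rw [Matrix.submatrix_mul _ _ _ id _ Function.bijective_id, Matrix.submatrix_id_id,
    Matrix.nonsing_inv_mul _ he]

theorem exists_submatrix_eq_one_and_span_range_row_eq [Finite σ] {W : Submodule F (σ → F)}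
    (hW : Module.finrank F W = Fintype.card ι) :
    ∃ (e : ι → σ) (w : Matrix ι σ F),
      w.submatrix id e = 1 ∧ Submodule.span F (Set.range w.row) = W := by
  let b : Module.Basis ι F W :=
    (Module.finBasisOfFinrankEq F W hW).reindex (Fintype.equivFin ι).symm
  let u : Matrix ι σ F := Matrix.of fun i => (b i : σ → F)
  have hu : LinearIndependent F u.row := b.linearIndependent.map' W.subtype W.ker_subtype
  obtain ⟨e, he⟩ := exists_isUnit_det_submatrix hu
  have hpivot := submatrix_inv_mul_eq_one he
  refine ⟨e, _, hpivot, Submodule.eq_of_le_of_finrank_eq ?_ ?_⟩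
  · rw [Submodule.span_le, Set.range_subset_iff]
    intro i
    have hrow : ((u.submatrix id e)⁻¹ * u).row i = ∑ l, (u.submatrix id e)⁻¹ i l • u.row l :=
      Matrix.mul_apply_eq_vecMul _ _ i |>.trans (Matrix.vecMul_eq_sum _ _)
    rw [hrow]
    exact sum_mem fun l _ => W.smul_mem _ (b l).2
  · rw [finrank_span_range_row_of_submatrix_eq_one hpivot, hW]

-- Cramer's rule for `w.submatrix id e`.
theorem det_submatrix_mul_inv_mul_apply {w : Matrix ι σ R} {e : ι → σ}
    (he : IsUnit (w.submatrix id e).det) (i : ι) (j : σ) :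
    (w.submatrix id e).det * ((w.submatrix id e)⁻¹ * w) i j =
      (w.submatrix id (Function.update e i j)).det := by
  have hcol : w.submatrix id (Function.update e i j) =
      (w.submatrix id e).updateCol i (w.col j) := by
    ext a b
    obtain rfl | hb := eq_or_ne b i
    · simp
    · simp [hb]
  rw [hcol, ← Matrix.cramer_apply]
  exact congrFun (Matrix.det_smul_inv_mulVec_eq_cramer _ (w.col j) he) i

theorem exists_valuation_inv_mul_le_one [Finite σ] {Γ₀ : Type*}
    [LinearOrderedCommGroupWithZero Γ₀] (v : Valuation F Γ₀) {w : Matrix ι σ F} {e₀ : ι → σ}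
    (he₀ : IsUnit (w.submatrix id e₀).det) :
    ∃ e : ι → σ, IsUnit (w.submatrix id e).det ∧
      ∀ i j, v (((w.submatrix id e)⁻¹ * w) i j) ≤ 1 := by
  have : Nonempty (ι → σ) := ⟨e₀⟩
  -- Pivot at the maximal minor of largest valuation.
  obtain ⟨e, hmax⟩ := Finite.exists_max fun e : ι → σ => v (w.submatrix id e).det
  have hpos : 0 < v (w.submatrix id e).det :=
    (zero_lt_iff.2 ((Valuation.ne_zero_iff v).2 he₀.ne_zero)).trans_le (hmax e₀)
  have he : IsUnit (w.submatrix id e).det := ((Valuation.ne_zero_iff v).1 hpos.ne').isUnit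
  refine ⟨e, he, fun i j => le_of_mul_le_mul_left ?_ hpos⟩
  rw [← map_mul, det_submatrix_mul_inv_mul_apply he, mul_one]
  exact hmax _

end Frames

section GenericPoint

variable {k ι σ A B : Type*} [CommRing k] [CommRing A] [CommRing B] [Algebra k A] [Algebra k B]
  [Fintype ι]

/-- The generic element `∑ i, Xᵢ wᵢ` of the row space of `w`: its coordinates are linear forms in
indeterminates `Xᵢ` indexed by the rows `wᵢ`. -/
noncomputable def genericRow (w : Matrix ι σ A) : σ → MvPolynomial ι A :=
  X ᵥ* w.map C

variable (k) in
/-- The ideal of the row space of `w` over the base ring `k`: the polynomials over `k` that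
vanish at the generic element of the row space. Over an infinite field these are the polynomials
vanishing on the row space (`rowSpaceIdeal_eq_vanishingIdeal`). -/
noncomputable def rowSpaceIdeal (w : Matrix ι σ A) : Ideal (MvPolynomial σ k) :=
  RingHom.ker (aeval (genericRow w) : MvPolynomial σ k →ₐ[k] MvPolynomial ι A)

theorem mem_rowSpaceIdeal {w : Matrix ι σ A} {f : MvPolynomial σ k} :
    f ∈ rowSpaceIdeal k w ↔ aeval (genericRow w) f = 0 :=
  Iff.rfl

theorem genericRow_comp_of_submatrix_eq_one [DecidableEq ι] {w : Matrix ι σ A} {e : ι → σ}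
    (hw : w.submatrix id e = 1) : genericRow w ∘ e = X := by
  have h : genericRow w ∘ e = X ᵥ* (w.submatrix id e).map C := rfl
  rw [h, hw, Matrix.map_one _ C_0 C_1, Matrix.vecMul_one]

theorem map_vecMul (φ : A →+* B) (c : ι → A) (w : Matrix ι σ A) :
    φ ∘ (c ᵥ* w) = (φ ∘ c) ᵥ* w.map φ :=
  funext <| RingHom.map_vecMul φ w c

theorem mapAlgHom_comp_genericRow (φ : A →ₐ[k] B) (w : Matrix ι σ A) :
    mapAlgHom φ ∘ genericRow w = genericRow (w.map φ) := by
  ext j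
  simp [genericRow, Matrix.vecMul, dotProduct]

theorem mapAlgHom_aeval_genericRow (φ : A →ₐ[k] B) (w : Matrix ι σ A) (f : MvPolynomial σ k) :
    mapAlgHom φ (aeval (genericRow w) f) = aeval (genericRow (w.map φ)) f := by
  rw [comp_aeval_apply, ← mapAlgHom_comp_genericRow]; rfl

theorem rowSpaceIdeal_le_map (φ : A →ₐ[k] B) (w : Matrix ι σ A) :
    rowSpaceIdeal k w ≤ rowSpaceIdeal k (w.map φ) := fun f hf => by
  rw [mem_rowSpaceIdeal, ← mapAlgHom_aeval_genericRow, mem_rowSpaceIdeal.1 hf, map_zero]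

theorem aeval_vecMul_genericRow [Algebra A B] [IsScalarTower k A B] (w : Matrix ι σ A)
    (c : ι → B) (f : MvPolynomial σ k) :
    aeval c (aeval (genericRow w) f) = aeval (c ᵥ* w.map (algebraMap A B)) f := by
  have hc : (fun j => aeval c (genericRow w j)) = c ᵥ* w.map (algebraMap A B) := by
    ext j
    simp [genericRow, Matrix.vecMul, dotProduct]
  rw [← hc]
  exact comp_aeval_apply _ ((aeval c : MvPolynomial ι A →ₐ[A] B).restrictScalars k) f

theorem rowSpaceIdeal_le_mul {ι' : Type*} [Fintype ι'] (g : Matrix ι' ι A) (w : Matrix ι σ A) :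
    rowSpaceIdeal k w ≤ rowSpaceIdeal k (g * w) := fun f hf => by
  have h : genericRow (g * w) = genericRow g ᵥ* w.map (algebraMap A (MvPolynomial ι' A)) := by
    rw [genericRow, Matrix.map_mul, ← Matrix.vecMul_vecMul]; rfl
  rw [mem_rowSpaceIdeal, h, ← aeval_vecMul_genericRow, mem_rowSpaceIdeal.1 hf, map_zero]

theorem comap_map_rowSpaceIdeal (w : Matrix ι σ A) :
    (rowSpaceIdeal A w).comap (map (algebraMap k A)) = rowSpaceIdeal k w := by
  ext f
  rw [Ideal.mem_comap, mem_rowSpaceIdeal, mem_rowSpaceIdeal, aeval_map_algebraMap]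

instance isPrime_rowSpaceIdeal [IsDomain A] (w : Matrix ι σ A) : (rowSpaceIdeal k w).IsPrime :=
  RingHom.ker_isPrime _

theorem eq_of_rowSpaceIdeal_le [DecidableEq ι] {w w' : Matrix ι σ A} {e : ι → σ}
    (hw : w.submatrix id e = 1) (hw' : w'.submatrix id e = 1)
    (h : rowSpaceIdeal A w ≤ rowSpaceIdeal A w') : w = w' := by
  ext i j
  let f : MvPolynomial σ A := rename e (genericRow w j) - X j
  have hf {u : Matrix ι σ A} (hu : u.submatrix id e = 1) :
      aeval (genericRow u) f = genericRow w j - genericRow u j := by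
    rw [map_sub, aeval_rename, genericRow_comp_of_submatrix_eq_one hu, aeval_X, aeval_X_left_apply]
  have hmem : f ∈ rowSpaceIdeal A w' := h (by rw [mem_rowSpaceIdeal, hf hw, sub_self])
  rw [mem_rowSpaceIdeal, hf hw', sub_eq_zero] at hmem
  have hcoeff := congrArg (aeval (Pi.single i 1 : ι → A)) hmem
  simpa [genericRow, Matrix.vecMul, dotProduct, Pi.single_apply] using hcoeff

end GenericPoint

section RowSpaceOverField

variable {k K ι σ : Type*} [Field k] [Field K] [Algebra k K] [Fintype ι]

theorem rowSpaceIdeal_eq_vanishingIdeal [Infinite K] (w : Matrix ι σ K) :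
    rowSpaceIdeal k w = vanishingIdeal k (Submodule.span K (Set.range w.row) : Set (σ → K)) := by
  ext f
  rw [mem_rowSpaceIdeal, mem_vanishingIdeal_iff, ← range_vecMulLinear, LinearMap.coe_range,
    Set.forall_mem_range, MvPolynomial.funext_iff]
  refine forall_congr' fun c => ?_
  rw [map_zero, ← coe_aeval_eq_eval, RingHom.coe_coe, aeval_vecMul_genericRow]
  rfl

theorem le_rowSpaceIdeal_iff [Infinite K] {I : Ideal (MvPolynomial σ k)} {w : Matrix ι σ K} :
    I ≤ rowSpaceIdeal k w ↔
      (Submodule.span K (Set.range w.row) : Set (σ → K)) ⊆ zeroLocus K I := by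
  rw [rowSpaceIdeal_eq_vanishingIdeal]
  exact le_zeroLocus_iff_le_vanishingIdeal.symm

variable [DecidableEq ι] {w : Matrix ι σ K} {e : ι → σ}

theorem ringKrullDim_quotient_rowSpaceIdeal_le [Algebra.IsIntegral k K]
    (hw : w.submatrix id e = 1) :
    ringKrullDim (MvPolynomial σ k ⧸ rowSpaceIdeal k w) ≤ Fintype.card ι := by
  have hcomp : (aeval (genericRow w) : MvPolynomial σ k →ₐ[k] MvPolynomial ι K).toRingHom.comp
      (rename e : MvPolynomial ι k →ₐ[k] MvPolynomial σ k).toRingHom = map (algebraMap k K) := by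
    ext i m
    · simp
    · simp [← congrFun (genericRow_comp_of_submatrix_eq_one hw) i]
  have hint := isIntegral_mvPolynomialMap (f := algebraMap k K) Algebra.IsIntegral.isIntegral ι
  calc
    ringKrullDim (MvPolynomial σ k ⧸ rowSpaceIdeal k w) ≤ ringKrullDim (MvPolynomial ι k) :=
      ringKrullDim_quotient_ker_le_of_isIntegral_comp (hcomp ▸ hint)
    _ = Fintype.card ι := by simp

theorem ringKrullDim_quotient_rowSpaceIdeal_self (hw : w.submatrix id e = 1) :
    ringKrullDim (MvPolynomial σ K ⧸ rowSpaceIdeal K w) = Fintype.card ι := by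
  have hsurj : Function.Surjective (aeval (R := K) (genericRow w)) := fun p =>
    ⟨rename e p, by
      rw [aeval_rename, genericRow_comp_of_submatrix_eq_one hw, aeval_X_left_apply]⟩
  calc
    ringKrullDim (MvPolynomial σ K ⧸ rowSpaceIdeal K w) = ringKrullDim (MvPolynomial ι K) :=
      ringKrullDim_eq_of_ringEquiv (RingHom.quotientKerEquivOfSurjective hsurj)
    _ = Fintype.card ι := by simp

end RowSpaceOverField

section FinitelyManyPlanes

variable {k K ι σ : Type*} [Field k] [Field K] [Algebra k K] [Fintype ι] [DecidableEq ι]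

theorem finite_setOf_le_rowSpaceIdeal [Finite σ] (e : ι → σ) {J : Ideal (MvPolynomial σ K)}
    (hJ : ringKrullDim (MvPolynomial σ K ⧸ J) ≤ Fintype.card ι) :
    {w : Matrix ι σ K | w.submatrix id e = 1 ∧ J ≤ rowSpaceIdeal K w}.Finite := by
  refine Set.Finite.of_finite_image (f := rowSpaceIdeal K)
    ((Ideal.finite_minimalPrimes_of_isNoetherianRing _ J).subset ?_) ?_
  · rintro _ ⟨w, ⟨hw, hJw⟩, rfl⟩
    exact mem_minimalPrimes_of_ringKrullDim_quotient_le hJw hJ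
      (ringKrullDim_quotient_rowSpaceIdeal_self hw).ge
  · exact fun w hw w' hw' h => eq_of_rowSpaceIdeal_le hw.1 hw'.1 h.le

theorem mem_of_infinite_of_forall_mem_rowSpaceIdeal [Finite σ] [Algebra.IsIntegral k K]
    {I : Ideal (MvPolynomial σ k)} [I.IsPrime]
    (hI : ringKrullDim (MvPolynomial σ k ⧸ I) ≤ (Fintype.card ι + 1 : ℕ))
    {G : Set (Matrix ι σ K)} (hG : G.Infinite) {e : ι → σ}
    (hpivot : ∀ w ∈ G, w.submatrix id e = 1) (hle : ∀ w ∈ G, I ≤ rowSpaceIdeal k w)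
    {f : MvPolynomial σ k} (hf : ∀ w ∈ G, f ∈ rowSpaceIdeal k w) : f ∈ I := by
  by_contra hfI
  let J := I ⊔ Ideal.span {f}
  -- Cutting with `f` leaves dimension `card ι`, where only finitely many planes fit.
  have hIJ : I < J := lt_of_le_of_ne le_sup_left fun h =>
    hfI (h ▸ Ideal.mem_sup_right (Ideal.mem_span_singleton_self f))
  have hJ : ringKrullDim (MvPolynomial σ k ⧸ J) ≤ Fintype.card ι := by
    have hsucc := (ringKrullDim_quotient_succ_le_of_lt hIJ).trans hI
    rw [Nat.cast_add, Nat.cast_one] at hsucc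
    exact ENat.WithBot.add_le_add_one_right_iff.1 hsucc
  have hint := isIntegral_mvPolynomialMap (f := algebraMap k K) Algebra.IsIntegral.isIntegral σ
  have hJK := (ringKrullDim_quotient_map_le_of_isIntegral hint J).trans hJ
  refine hG ((finite_setOf_le_rowSpaceIdeal e hJK).subset fun w hw => ⟨hpivot w hw, ?_⟩)
  rw [Ideal.map_le_iff_le_comap, comap_map_rowSpaceIdeal]
  exact sup_le (hle w hw) ((Ideal.span_singleton_le_iff_mem _).2 (hf w hw))

end FinitelyManyPlanes

/-- `PlaneThrough I e w x` says that the plane spanned by the rows of `w` lies in the zero locus of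
`I` and passes through `x`. The plane is presented by its frame `w` in reduced form, the identity in
the pivot columns `e`, so that its parameters are entries of `w` in any `k`-algebra `A`. A point
of the plane has its own pivot coordinates as coefficients on the frame, which makes passing
through `x` a system of equations, preserved by homomorphisms and reflected by injective ones. -/
structure PlaneThrough {k ι σ A : Type*} [CommRing k] [CommRing A] [Algebra k A] [Fintype ι]
    [DecidableEq ι] (I : Ideal (MvPolynomial σ k)) (e : ι → σ) (w : Matrix ι σ A) (x : σ → A) :
    Prop where
  pivot : w.submatrix id e = 1
  le : I ≤ rowSpaceIdeal k w
  through : (x ∘ e) ᵥ* w = x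

namespace PlaneThrough

variable {k ι σ A B : Type*} [CommRing k] [CommRing A] [CommRing B] [Algebra k A] [Algebra k B]
  [Fintype ι] [DecidableEq ι] {I : Ideal (MvPolynomial σ k)} {e : ι → σ} {w : Matrix ι σ A}
  {x : σ → A}

protected theorem map (φ : A →ₐ[k] B) (h : PlaneThrough I e w x) :
    PlaneThrough I e (w.map φ) (φ ∘ x) where
  pivot := by rw [Matrix.submatrix_map, h.pivot, Matrix.map_one _ (map_zero φ) (map_one φ)]
  le := h.le.trans (rowSpaceIdeal_le_map φ w)
  through := by
    conv_rhs => rw [← h.through]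
    exact (map_vecMul (φ : A →+* B) (x ∘ e) w).symm

theorem of_jointly_injective {τ : Type*} {C : τ → Type*} [∀ t, CommRing (C t)]
    [∀ t, Algebra k (C t)] (φ : ∀ t, A →ₐ[k] C t) (hφ : ∀ a b, (∀ t, φ t a = φ t b) → a = b)
    (h : ∀ t, PlaneThrough I e (w.map (φ t)) (φ t ∘ x)) : PlaneThrough I e w x where
  pivot := by
    ext i j
    refine hφ _ _ fun t => ?_
    have hij := congrFun₂ (h t).pivot i j
    rw [← Matrix.map_one (φ t) (map_zero _) (map_one _)] at hij
    exact hij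
  le f hf := by
    rw [mem_rowSpaceIdeal]
    ext m
    refine hφ _ _ fun t => ?_
    have hm := congrArg (coeff m) ((mapAlgHom_aeval_genericRow (φ t) w f).trans ((h t).le hf))
    rw [coeff_zero, map_zero]
    exact (coeff_map _ _ _).symm.trans hm
  through := funext fun j => hφ _ _ fun t =>
    (congrFun (map_vecMul (φ t : A →+* C t) (x ∘ e) w) j).trans (congrFun (h t).through j)

theorem of_injective (φ : A →ₐ[k] B) (hφ : Function.Injective φ)
    (h : PlaneThrough I e (w.map φ) (φ ∘ x)) : PlaneThrough I e w x :=
  of_jointly_injective (fun _ : Unit => φ) (fun _ _ h => hφ (h ())) fun _ => h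

theorem of_genericRow (hw : w.submatrix id e = 1) (hI : I ≤ rowSpaceIdeal k w) :
    PlaneThrough I e (w.map C) (genericRow w) where
  pivot := by rw [Matrix.submatrix_map, hw, Matrix.map_one _ C_0 C_1]
  le := hI.trans (rowSpaceIdeal_le_map (IsScalarTower.toAlgHom k A (MvPolynomial ι A)) w)
  through := by rw [genericRow_comp_of_submatrix_eq_one hw]; rfl

theorem change_pivot (h : PlaneThrough I e w x) {e' : ι → σ}
    (he' : IsUnit (w.submatrix id e').det) :
    PlaneThrough I e' ((w.submatrix id e')⁻¹ * w) x where
  pivot := submatrix_inv_mul_eq_one he'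
  le := h.le.trans (rowSpaceIdeal_le_mul _ w)
  through := by
    have hx : x ∘ e' = (x ∘ e) ᵥ* w.submatrix id e' := by
      conv_lhs => rw [← h.through]
      rfl
    rw [hx, Matrix.vecMul_vecMul, ← Matrix.mul_assoc, Matrix.mul_nonsing_inv _ he', Matrix.one_mul,
      h.through]

end PlaneThrough

universe u

theorem exists_algHom_field_ker_comp_le {k R : Type*} {A : Type u} [CommRing k] [CommRing R]
    [CommRing A] [Algebra k R] [Algebra k A] (φ : R →ₐ[k] A) (I : Ideal R) [I.IsPrime]
    (hφ : RingHom.ker φ ≤ I) :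
    ∃ (Ω : Type u) (_ : Field Ω) (_ : Algebra k Ω) (ψ : A →ₐ[k] Ω),
      RingHom.ker (ψ.comp φ) ≤ I := by
  have hdisj : Disjoint ((⊥ : Ideal A) : Set A) (I.primeCompl.map φ) := by
    rw [Set.disjoint_left]
    rintro _ rfl ⟨f, hfI, hf⟩
    exact hfI (hφ hf)
  obtain ⟨P, hP, -, hPI⟩ := Ideal.exists_le_prime_disjoint _ _ hdisj
  refine ⟨P.ResidueField, inferInstance, inferInstance, IsScalarTower.toAlgHom k A _, ?_⟩
  intro f hf
  by_contra hfI
  have hfP : φ f ∈ P := Ideal.algebraMap_residueField_eq_zero.1 hf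
  exact Set.disjoint_left.1 hPI hfP ⟨f, hfI, rfl⟩

theorem exists_valuationSubring_of_ker_le {R F : Type*} [CommRing R] [Field F] (φ : R →+* F)
    {p : Ideal R} (hp : p ≠ ⊤) (hφ : RingHom.ker φ ≤ p) :
    ∃ B : ValuationSubring F, (∀ f, φ f ∈ B) ∧ ∀ f ∈ p, φ f ∈ B.nonunits := by
  have hq : p.map φ.rangeRestrict ≠ ⊤ := by
    have hker : RingHom.ker φ.rangeRestrict ≤ p := by rwa [RingHom.ker_rangeRestrict]
    rwa [Ne, Ideal.map_eq_top_iff_of_ker_le _ hker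
      (RingHom.isIntegral_of_surjective _ φ.rangeRestrict_surjective)]
  obtain ⟨B, hB, hpB⟩ := Ideal.image_subset_nonunits_valuationSubring _ hq
  exact ⟨B, fun f => hB ⟨f, rfl⟩, fun f hf => hpB ⟨_, Ideal.mem_map_of_mem _ hf, rfl⟩⟩

theorem exists_algHom_of_finiteType (F T K : Type*) [Field F] [CommRing T] [Nontrivial T]
    [Algebra F T] [Algebra.FiniteType F T] [Field K] [IsAlgClosed K] [Algebra F K] :
    Nonempty (T →ₐ[F] K) := by
  obtain ⟨M, hM⟩ := Ideal.exists_maximal T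
  let := Ideal.Quotient.field M
  have : Module.Finite F (T ⧸ M) := finite_of_finite_type_of_isJacobsonRing F (T ⧸ M)
  exact ⟨(IsAlgClosed.lift : T ⧸ M →ₐ[F] K).comp (Ideal.Quotient.mkₐ F M)⟩

namespace PlaneThrough

section Specialization

variable {k K ι σ : Type*} [CommRing k] [Field K] [Algebra k K] [Fintype ι] [DecidableEq ι]
  [Finite σ] {I p : Ideal (MvPolynomial σ k)} {e : ι → σ}

-- The valuative criterion of properness for the Grassmannian.
theorem exists_specialization {Ω : Type u} [Field Ω] [Algebra k Ω] {w : Matrix ι σ Ω} {y : σ → Ω}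
    (h : PlaneThrough I e w y) (hp : p ≠ ⊤)
    (hy : RingHom.ker (aeval y : MvPolynomial σ k →ₐ[k] Ω) ≤ p) :
    ∃ (κ : Type u) (_ : Field κ) (_ : Algebra k κ) (e' : ι → σ) (w' : Matrix ι σ κ) (x : σ → κ),
      PlaneThrough I e' w' x ∧ p ≤ RingHom.ker (aeval x : MvPolynomial σ k →ₐ[k] κ) := by
  obtain ⟨B, hB, hpB⟩ := exists_valuationSubring_of_ker_le _ hp hy
  have he : IsUnit (w.submatrix id e).det := by rw [h.pivot, Matrix.det_one]; exact isUnit_one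
  obtain ⟨e', he', hwB⟩ := exists_valuation_inv_mul_le_one B.valuation he
  have hk (a : k) : algebraMap k Ω a ∈ B := by simpa using hB (C a)
  let : Algebra k B := ((algebraMap k Ω).codRestrict B hk).toAlgebra
  let inclusion : B →ₐ[k] Ω := { B.subtype with commutes' := fun _ => rfl }
  let residue : B →ₐ[k] IsLocalRing.ResidueField B := IsScalarTower.toAlgHom k B _
  let wB : Matrix ι σ B :=
    Matrix.of fun i j => ⟨_, (B.valuation_le_one_iff _).1 (hwB i j)⟩
  let yB : σ → B := fun j => ⟨y j, by simpa using hB (X j)⟩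
  have hplane : PlaneThrough I e' wB yB :=
    of_injective inclusion Subtype.val_injective (h.change_pivot he')
  refine ⟨IsLocalRing.ResidueField B, _, _, e', _, _, hplane.map residue, ?_⟩
  intro f hf
  have hval : (aeval yB f : B) = aeval y f := comp_aeval_apply yB inclusion f
  have hres : aeval (residue ∘ yB) f = residue (aeval yB f) :=
    (comp_aeval_apply yB residue f).symm
  rw [RingHom.mem_ker, hres]
  have hf' : ((aeval yB f : B) : Ω) ∈ B.nonunits := hval.symm ▸ hpB f hf
  exact (IsLocalRing.residue_eq_zero_iff _).2 (ValuationSubring.coe_mem_nonunits_iff.1 hf')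

theorem exists_descent {F κ : Type*} [Field F] [Algebra k F] [CommRing κ] [Nontrivial κ]
    [Algebra k κ] [Algebra F κ] [IsScalarTower k F κ] [Algebra F K] [IsScalarTower k F K]
    [IsAlgClosed K] {w : Matrix ι σ κ} {x : σ → F}
    (h : PlaneThrough I e w (algebraMap F κ ∘ x)) :
    ∃ w' : Matrix ι σ K, PlaneThrough I e w' (algebraMap F K ∘ x) := by
  let T := Algebra.adjoin F (Set.range fun ij : ι × σ => w ij.1 ij.2)
  have : Algebra.FiniteType F T := .adjoin_of_finite (Set.finite_range _)
  obtain ⟨φ⟩ := exists_algHom_of_finiteType F T K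
  let wT : Matrix ι σ T :=
    Matrix.of fun i j => ⟨w i j, Algebra.subset_adjoin ⟨(i, j), rfl⟩⟩
  have hT : PlaneThrough I e wT (algebraMap F T ∘ x) :=
    of_injective (T.val.restrictScalars k) Subtype.val_injective h
  have hx : algebraMap F K ∘ x = φ.restrictScalars k ∘ algebraMap F T ∘ x :=
    funext fun j => (φ.commutes (x j)).symm
  exact ⟨wT.map φ, hx ▸ hT.map (φ.restrictScalars k)⟩

end Specialization

end PlaneThrough

theorem isMaximal_ker_aeval {k K σ : Type*} [Field k] [Field K] [Algebra k K]
    [Algebra.IsIntegral k K] (x : σ → K) :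
    (RingHom.ker (aeval x : MvPolynomial σ k →ₐ[k] K)).IsMaximal := by
  have hcomp : (aeval x : MvPolynomial σ k →ₐ[k] K).toRingHom.comp C = algebraMap k K := by
    ext; simp
  have hint : (algebraMap k K).IsIntegral := Algebra.IsIntegral.isIntegral
  have hx := RingHom.IsIntegral.tower_top C (aeval x : MvPolynomial σ k →ₐ[k] K).toRingHom
    (hcomp ▸ hint)
  exact Ideal.isMaximal_comap_of_isIntegral_of_isMaximal' _ hx (⊥ : Ideal K)

section GenericPlane

universe uK uι uσ

variable {k : Type*} {K : Type uK} {ι : Type uι} {σ : Type uσ} [Field k] [Field K] [Algebra k K]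
  [Algebra.IsAlgebraic k K] [Finite σ] [Fintype ι] [DecidableEq ι] {I : Ideal (MvPolynomial σ k)}
  [I.IsPrime] {e : ι → σ}

theorem exists_generic_planeThrough
    (hI : ringKrullDim (MvPolynomial σ k ⧸ I) ≤ (Fintype.card ι + 1 : ℕ))
    {G : Set (Matrix ι σ K)} (hG : G.Infinite)
    (hpivot : ∀ w ∈ G, w.submatrix id e = 1) (hle : ∀ w ∈ G, I ≤ rowSpaceIdeal k w) :
    ∃ (Ω : Type max uK uι uσ) (_ : Field Ω) (_ : Algebra k Ω) (w : Matrix ι σ Ω) (y : σ → Ω),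
      PlaneThrough I e w y ∧ RingHom.ker (aeval y : MvPolynomial σ k →ₐ[k] Ω) ≤ I := by
  let A := G → MvPolynomial ι K
  let wG : Matrix ι σ A := Matrix.of fun i j w => C (w.1 i j)
  let yG : σ → A := fun j w => genericRow w.1 j
  have hplane : PlaneThrough I e wG yG :=
    .of_jointly_injective (Pi.evalAlgHom k fun _ : G => MvPolynomial ι K) (fun _ _ => funext)
      fun w => .of_genericRow (hpivot w w.2) (hle w w.2)
  have hker : RingHom.ker (aeval yG : MvPolynomial σ k →ₐ[k] A) ≤ I := fun f hf =>
    mem_of_infinite_of_forall_mem_rowSpaceIdeal hI hG hpivot hle fun w hw =>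
      (comp_aeval_apply yG (Pi.evalAlgHom k (fun _ : G => MvPolynomial ι K) ⟨w, hw⟩) f).symm.trans
        (congrFun hf ⟨w, hw⟩)
  obtain ⟨Ω, _, _, ψ, hψ⟩ := exists_algHom_field_ker_comp_le _ I hker
  refine ⟨Ω, _, _, _, _, hplane.map ψ, ?_⟩
  rwa [comp_aeval] at hψ

end GenericPlane

section PlanesOverField

variable {k K ι σ : Type*} [Field k] [Field K] [Algebra k K] [Fintype ι] [DecidableEq ι]
  {I : Ideal (MvPolynomial σ k)}

theorem exists_planeThrough_of_mem_zeroLocus [Finite σ] [Algebra.IsAlgebraic k K]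
    [IsAlgClosed K] {Ω : Type*} [Field Ω] [Algebra k Ω] {e : ι → σ} {w : Matrix ι σ Ω} {y : σ → Ω}
    (h : PlaneThrough I e w y) (hy : RingHom.ker (aeval y : MvPolynomial σ k →ₐ[k] Ω) ≤ I)
    {x : σ → K} (hx : x ∈ zeroLocus K I) :
    ∃ (e' : ι → σ) (w' : Matrix ι σ K), PlaneThrough I e' w' x := by
  let p := RingHom.ker (aeval x : MvPolynomial σ k →ₐ[k] K)
  have hp : p.IsMaximal := isMaximal_ker_aeval x
  obtain ⟨κ, _, _, e', wκ, xκ, hplane, hpκ⟩ := h.exists_specialization hp.ne_top (hy.trans hx)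
  let := Ideal.Quotient.field p
  let toκ : (MvPolynomial σ k ⧸ p) →ₐ[k] κ := Ideal.Quotient.liftₐ p (aeval xκ) hpκ
  let toK : (MvPolynomial σ k ⧸ p) →ₐ[k] K := Ideal.Quotient.liftₐ p (aeval x) fun _ h => h
  algebraize [toκ.toRingHom, toK.toRingHom]
  let xp : σ → MvPolynomial σ k ⧸ p := fun j => Ideal.Quotient.mk p (X j)
  have hxκ : algebraMap _ κ ∘ xp = xκ := by ext j; exact aeval_X xκ j
  have hxK : algebraMap _ K ∘ xp = x := by ext j; exact aeval_X x j
  have : IsScalarTower k (MvPolynomial σ k ⧸ p) κ := .of_algHom toκ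
  have : IsScalarTower k (MvPolynomial σ k ⧸ p) K := .of_algHom toK
  rw [← hxκ] at hplane
  obtain ⟨w', hw'⟩ := hplane.exists_descent (K := K)
  exact ⟨e', w', hxK ▸ hw'⟩

theorem PlaneThrough.exists_submodule [Infinite K] {e : ι → σ} {w : Matrix ι σ K} {x : σ → K}
    (h : PlaneThrough I e w x) :
    ∃ W : Submodule K (σ → K),
      Module.finrank K W = Fintype.card ι ∧ x ∈ W ∧ (W : Set (σ → K)) ⊆ zeroLocus K I := by
  refine ⟨Submodule.span K (Set.range w.row), finrank_span_range_row_of_submatrix_eq_one h.pivot,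
    ?_, le_rowSpaceIdeal_iff.1 h.le⟩
  rw [← range_vecMulLinear]
  exact ⟨_, h.through⟩

theorem exists_infinite_setOf_submatrix_eq_one [Finite σ] [Infinite K]
    (hinf : {W : Submodule K (σ → K) |
      Module.finrank K W = Fintype.card ι ∧ (W : Set (σ → K)) ⊆ zeroLocus K I}.Infinite) :
    ∃ e : ι → σ, {w : Matrix ι σ K | w.submatrix id e = 1 ∧ I ≤ rowSpaceIdeal k w}.Infinite := by
  by_contra! hfin
  let rowSpace (w : Matrix ι σ K) : Submodule K (σ → K) := Submodule.span K (Set.range w.row)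
  let frames (e : ι → σ) : Set (Matrix ι σ K) :=
    {w | w.submatrix id e = 1 ∧ I ≤ rowSpaceIdeal k w}
  have hframes : (⋃ e, rowSpace '' frames e).Finite :=
    Set.finite_iUnion fun e => (hfin e).image rowSpace
  refine hinf (hframes.subset fun W hW => ?_)
  obtain ⟨e, w, hw, hwW⟩ := exists_submatrix_eq_one_and_span_range_row_eq hW.1
  exact Set.mem_iUnion.2 ⟨e, w, ⟨hw, le_rowSpaceIdeal_iff.2 (hwW ▸ hW.2)⟩, hwW⟩

theorem ringKrullDim_quotient_vanishingIdeal_le [Finite σ] [Algebra.IsIntegral k K]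
    [Infinite K] (W : Submodule K (σ → K)) :
    ringKrullDim (MvPolynomial σ k ⧸ vanishingIdeal k (W : Set (σ → K))) ≤ Module.finrank K W := by
  obtain ⟨e, w, hw, hwW⟩ := exists_submatrix_eq_one_and_span_range_row_eq
    (Fintype.card_fin (Module.finrank K W)).symm
  have hdim := ringKrullDim_quotient_rowSpaceIdeal_le (k := k) hw
  rwa [rowSpaceIdeal_eq_vanishingIdeal, hwW, Fintype.card_fin] at hdim

end PlanesOverField

section LinearSubspaces

variable {k K σ : Type*} [Field k] [Field K] [IsAlgClosed K] [Algebra k K] [Finite σ]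
  {I : Ideal (MvPolynomial σ k)} [I.IsPrime]

theorem exists_vanishingIdeal_le_of_finite {τ : Type*} {s : Set τ}
    (hs : s.Finite) {V : τ → Set (σ → K)} (hV : zeroLocus K I ⊆ ⋃ t ∈ s, V t) :
    ∃ t ∈ s, vanishingIdeal k (V t) ≤ I := by
  have hprod : ∏ t ∈ hs.toFinset, vanishingIdeal k (V t) ≤ I := by
    rw [← IsPrime.vanishingIdeal_zeroLocus (K := K) I]
    intro f hf x hx
    obtain ⟨t, ht, hxt⟩ := Set.mem_iUnion₂.1 (hV hx)
    exact Ideal.prod_le_inf.trans (Finset.inf_le (hs.mem_toFinset.2 ht)) hf x hxt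
  simpa using (Ideal.IsPrime.prod_le ‹_›).1 hprod

variable [Algebra.IsAlgebraic k K] {r : ℕ}

theorem exists_mem_of_infinite (hI : ringKrullDim (MvPolynomial σ k ⧸ I) ≤ (r + 1 : ℕ))
    (hinf : {W : Submodule K (σ → K) |
      Module.finrank K W = r ∧ (W : Set (σ → K)) ⊆ zeroLocus K I}.Infinite)
    {x : σ → K} (hx : x ∈ zeroLocus K I) :
    ∃ W : Submodule K (σ → K),
      Module.finrank K W = r ∧ x ∈ W ∧ (W : Set (σ → K)) ⊆ zeroLocus K I := by
  have : Infinite K := IsAlgClosed.instInfinite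
  rw [← Fintype.card_fin r] at hI hinf ⊢
  obtain ⟨e, hG⟩ := exists_infinite_setOf_submatrix_eq_one hinf
  obtain ⟨Ω, _, _, w, y, hwy, hy⟩ :=
    exists_generic_planeThrough hI hG (fun w hw => hw.1) (fun w hw => hw.2)
  obtain ⟨e', w', hw'⟩ := exists_planeThrough_of_mem_zeroLocus hwy hy hx
  exact hw'.exists_submodule

theorem infinite_of_forall_exists_mem (hI : r < ringKrullDim (MvPolynomial σ k ⧸ I))
    (hcover : ∀ x ∈ zeroLocus K I, x ≠ 0 → ∃ W : Submodule K (σ → K),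
      Module.finrank K W = r ∧ x ∈ W ∧ (W : Set (σ → K)) ⊆ zeroLocus K I) :
    {W : Submodule K (σ → K) |
      Module.finrank K W = r ∧ (W : Set (σ → K)) ⊆ zeroLocus K I}.Infinite := by
  intro hfin
  have : Infinite K := IsAlgClosed.instInfinite
  have hcover' : zeroLocus K I ⊆ ⋃ W ∈ insert ⊥ {W : Submodule K (σ → K) |
      Module.finrank K W = r ∧ (W : Set (σ → K)) ⊆ zeroLocus K I}, (W : Set (σ → K)) := by
    intro x hx
    rw [Set.mem_iUnion₂]
    obtain rfl | hx0 := eq_or_ne x 0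
    · exact ⟨⊥, Set.mem_insert _ _, zero_mem _⟩
    · obtain ⟨W, hr, hxW, hWI⟩ := hcover x hx hx0
      exact ⟨W, Set.mem_insert_of_mem _ ⟨hr, hWI⟩, hxW⟩
  obtain ⟨W, hW, hWI⟩ := exists_vanishingIdeal_le_of_finite (hfin.insert ⊥) hcover'
  have hWr : Module.finrank K W ≤ r := by
    obtain rfl | hW := hW
    · simp
    · exact hW.1.le
  refine hI.not_ge ?_
  calc
    ringKrullDim (MvPolynomial σ k ⧸ I)
      ≤ ringKrullDim (MvPolynomial σ k ⧸ vanishingIdeal k (W : Set (σ → K))) :=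
        ringKrullDim_le_of_surjective _ (Ideal.Quotient.factor_surjective hWI)
    _ ≤ Module.finrank K W := ringKrullDim_quotient_vanishingIdeal_le W
    _ ≤ r := by exact_mod_cast hWr

end LinearSubspaces

theorem stmt_16_general (k K : Type*) [Field k] [Field K] [IsAlgClosed K] [Algebra k K]
    [Algebra.IsAlgebraic k K] (σ : Type*) [Finite σ] (r : ℕ) (I : Ideal (MvPolynomial σ k))
    (hI : I.IsPrime)
    (hdim : ringKrullDim (MvPolynomial σ k ⧸ I) = ((r + 1 : ℕ) : WithBot ℕ∞)) :
    (∀ x : σ → K, (∀ f ∈ I, aeval x f = 0) → x ≠ 0 →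
      ∃ W : Submodule K (σ → K),
        Module.finrank K W = r ∧ x ∈ W ∧ ∀ y ∈ W, ∀ f ∈ I, aeval y f = 0) ↔
    {W : Submodule K (σ → K) |
      Module.finrank K W = r ∧ ∀ y ∈ W, ∀ f ∈ I, aeval y f = 0}.Infinite := by
  constructor
  · have hr : r < ringKrullDim (MvPolynomial σ k ⧸ I) := by
      rw [hdim]
      exact_mod_cast Nat.lt_succ_self r
    exact infinite_of_forall_exists_mem hr
  · exact fun hinf x hx _ => exists_mem_of_infinite hdim.le hinf hx

/-- Proposition 7.4 of Salberger (equivalence (a) ⟺ (c)): for an integral closed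
`r`-dimensional subscheme `X = Proj(k[x_0,…,x_n]/I) ⊂ P^n_k` with zero set `V ⊆ k̄^{n+1}`,
`X` is covered by its linear divisors (every nonzero point of `V` lies on an
`r`-dimensional `k̄`-linear subspace contained in `V`) if and only if there are
infinitely many `r`-dimensional `k̄`-linear subspaces contained in `V`. -/
theorem stmt_16 (k : Type*) [Field k] (n r : ℕ) (hr : 1 ≤ r)
    (I : Ideal (MvPolynomial (Fin (n + 1)) k)) (hIprime : I.IsPrime)
    (hhom : ∀ f ∈ I, ∀ j : ℕ, homogeneousComponent j f ∈ I)
    (hdim : ringKrullDim (MvPolynomial (Fin (n + 1)) k ⧸ I) = ((r + 1 : ℕ) : WithBot ℕ∞)) :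
    (∀ x : Fin (n + 1) → AlgebraicClosure k, (∀ f ∈ I, aeval x f = 0) → x ≠ 0 →
      ∃ W : Submodule (AlgebraicClosure k) (Fin (n + 1) → AlgebraicClosure k),
        Module.finrank (AlgebraicClosure k) W = r ∧ x ∈ W ∧
        ∀ y ∈ W, ∀ f ∈ I, aeval y f = 0) ↔
    {W : Submodule (AlgebraicClosure k) (Fin (n + 1) → AlgebraicClosure k) |
      Module.finrank (AlgebraicClosure k) W = r ∧
      ∀ y ∈ W, ∀ f ∈ I, aeval y f = 0}.Infinite :=
  stmt_16_general k (AlgebraicClosure k) (Fin (n + 1)) r I hIprime hdim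
end
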